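/- For 1/4 < q < 1/2, the function F(z) = (1 − z)^{−2q} satisfies ∫_𝔻 |F(z)| (1 − Re z)^{−5/4} dA(z) = ∞, and consequently F ∉ H^1_{u₀}(𝔻), even though F ∈ H^1(𝔻); in particular H^1_{u₀}(𝔻) ⊊ H^1(𝔻). -/

import Mathlib

open MeasureTheory Filter Metric Complex Set
open scoped Real ENNReal Topology

noncomputable section

/-- The Laplacian of a real-valued function on `ℂ ≅ ℝ²`. -/
def lap (φ : ℂ → ℝ) (z : ℂ) : ℝ :=
  fderiv ℝ (fun w => fderiv ℝ φ w 1) z 1 +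
    fderiv ℝ (fun w => fderiv ℝ φ w Complex.I) z Complex.I

/-- `h` is harmonic on `s`. -/
def HarmonicOn (h : ℂ → ℝ) (s : Set ℂ) : Prop :=
  ContDiffOn ℝ 2 h s ∧ ∀ z ∈ s, lap h z = 0

/-- `u` is subharmonic on `s` (continuous with the sub-mean-value property). -/
def SubharmonicOn (u : ℂ → ℝ) (s : Set ℂ) : Prop :=
  ContinuousOn u s ∧ ∀ z ∈ s, ∀ r : ℝ, 0 < r → closedBall z r ⊆ s →
    u z ≤ (2 * Real.pi)⁻¹ *
      ∫ t in (0:ℝ)..(2 * Real.pi), u (z + (r : ℂ) * Complex.exp ((t : ℂ) * Complex.I))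

/-- `u` is a negative continuous subharmonic exhaustion function for `Ω`:
sublevel sets `{u < c}`, `c < 0`, are relatively compact in `Ω`. -/
structure IsExhaustion (u : ℂ → ℝ) (Ω : Set ℂ) : Prop where
  neg : ∀ z ∈ Ω, u z < 0
  subh : SubharmonicOn u Ω
  exh : ∀ c : ℝ, c < 0 → IsCompact (closure {z | z ∈ Ω ∧ u z < c}) ∧
    closure {z | z ∈ Ω ∧ u z < c} ⊆ Ω

/-- `ν` is the Riesz measure `dd^c u = (1/4) Δu dA` of `u` on `Ω`, characterized
distributionally: `∫ φ dν = (1/4) ∫_Ω u Δφ dA` for test functions `φ`. -/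
def IsRieszMeasure (u : ℂ → ℝ) (Ω : Set ℂ) (ν : Measure ℂ) : Prop :=
  ν Ωᶜ = 0 ∧
  ∀ φ : ℂ → ℝ, ContDiff ℝ 2 φ → HasCompactSupport φ → tsupport φ ⊆ Ω →
    ∫ z, φ z ∂ν = (4 : ℝ)⁻¹ * ∫ z in Ω, u z * lap φ z

/-- `μ` is the Monge–Ampère measure `μ_{u,r} = dd^c max(u,r) - χ_{Ω∖{u<r}} dd^c u`,
where `ν = dd^c u`. -/
def IsMAMeasure (u : ℂ → ℝ) (Ω : Set ℂ) (ν : Measure ℂ) (r : ℝ) (μ : Measure ℂ) : Prop :=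
  ∃ νr : Measure ℂ, IsRieszMeasure (fun z => max (u z) r) Ω νr ∧
    μ = νr - ν.restrict {z | z ∈ Ω ∧ r ≤ u z}

/-- The `p`-th power of the Poletsky–Stessin Hardy "norm",
`limsup_{r→0⁻} ∫ |f|^p dμ_{u,r}`. -/
def psNormPow (p : ℝ) (μfam : ℝ → Measure ℂ) (f : ℂ → ℂ) : ℝ≥0∞ :=
  Filter.limsup (fun r => ∫⁻ z, ENNReal.ofReal (‖f z‖ ^ p) ∂(μfam r))
    (nhdsWithin 0 (Set.Iio 0))

/-- The Poletsky–Stessin Hardy norm. -/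
def psNorm (p : ℝ) (μfam : ℝ → Measure ℂ) (f : ℂ → ℂ) : ℝ≥0∞ :=
  psNormPow p μfam f ^ (1 / p)

/-- Membership in the Poletsky–Stessin Hardy space `H^p_u(Ω)`, where `μfam r = μ_{u,r}`. -/
def MemPS (p : ℝ) (Ω : Set ℂ) (μfam : ℝ → Measure ℂ) (f : ℂ → ℂ) : Prop :=
  DifferentiableOn ℂ f Ω ∧ psNormPow p μfam f < ⊤

/-- Membership in the classical Hardy space `H^p(Ω)`: `|f|^p` has a harmonic majorant. -/
def MemHClassical (p : ℝ) (Ω : Set ℂ) (f : ℂ → ℂ) : Prop :=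
  DifferentiableOn ℂ f Ω ∧
    ∃ h : ℂ → ℝ, HarmonicOn h Ω ∧ ∀ z ∈ Ω, ‖f z‖ ^ p ≤ h z

/-- A bounded domain in `ℂ` containing `0` whose boundary is an analytic Jordan curve:
there is a conformal map of the unit disc onto `Ω` extending analytically and injectively
across the closed disc, carrying the unit circle onto the boundary of `Ω`. -/
structure AnalyticJordanDomain (Ω : Set ℂ) : Prop where
  isOpen : IsOpen Ω
  isConnected : IsConnected Ω
  isBounded : Bornology.IsBounded Ω
  zero_mem : (0:ℂ) ∈ Ω
  analyticBoundary : ∃ (U : Set ℂ) (ψ : ℂ → ℂ), IsOpen U ∧ closedBall (0:ℂ) 1 ⊆ U ∧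
    DifferentiableOn ℂ ψ U ∧ Set.InjOn ψ U ∧ ψ '' ball (0:ℂ) 1 = Ω ∧
    ψ '' sphere (0:ℂ) 1 = frontier Ω

/-- `μ` is the boundary Monge–Ampère measure: the weak* limit of the measures
`μfam r = μ_{u,r}` as `r → 0⁻`. -/
def IsBoundaryMA (μfam : ℝ → Measure ℂ) (μ : Measure ℂ) : Prop :=
  ∀ φ : ℂ → ℝ, Continuous φ →
    Filter.Tendsto (fun r => ∫ z, φ z ∂(μfam r)) (nhdsWithin 0 (Set.Iio 0))
      (nhds (∫ z, φ z ∂μ))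

/-- `f` has nontangential limit `L` at the boundary point `ξ` of `Ω`. -/
def NTLim (Ω : Set ℂ) (f : ℂ → ℂ) (ξ : ℂ) (L : ℂ) : Prop :=
  ∀ C : ℝ, 1 < C →
    Filter.Tendsto f
      (nhdsWithin ξ {z | z ∈ Ω ∧ dist z ξ ≤ C * infDist z (frontier Ω)}) (nhds L)

/-- Arc length measure on the boundary of `Ω` (1-dimensional Hausdorff measure). -/
def arcLen (Ω : Set ℂ) : Measure ℂ := (μH[1] : Measure ℂ).restrict (frontier Ω)


/-- The classical Hardy space `H^1(𝔻)`: holomorphic on the unit disc with uniformly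
bounded integral means `∫_0^{2π} |f(r e^{iθ})| dθ`, `0 < r < 1`. -/
def MemH1Disc (f : ℂ → ℂ) : Prop :=
  DifferentiableOn ℂ f (ball (0:ℂ) 1) ∧
    ∃ M : ℝ, ∀ r : ℝ, 0 < r → r < 1 →
      (∫ θ in (0:ℝ)..(2 * Real.pi),
        ‖f ((r : ℂ) * Complex.exp ((θ : ℂ) * Complex.I))‖) ≤ M

/-!
Let `f ∈ H^1_u(𝔻)` and let `w = √(1 + |f|²) - 1`, a `C²` subharmonic substitute for `|f|`. The
Lelong–Jensen inequality bounds both `∫ w Δu` and `∫ (-u) Δw` by the limsup of `∫ |f| dμ_{u,r}`.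

For `u = -(1 - Re z)^β - ρ` the Laplacian is `β (1 - β) (1 - Re z)^(β - 2)`, so by the first bound
`|f|` is integrable against this weight as soon as it is bounded below. The function `(1 - z)^(-2q)`
is not: its integral already diverges over a parabolic region tangent to the circle at `1`.

Since `Δu ≥ c > 0`, comparing `u` with `|z|² - 1` gives `-u ≥ (c / 8) (1 - |z|²)`, and the two
bounds control `∫ w` and `∫ (1 - |z|²) Δw`. Testing Green's formula with radial functions turns this
into a bound on the circle averages of `w`, that is, `f ∈ H^1(𝔻)`.
-/

section Laplacian

variable {φ ψ : ℂ → ℝ} {s : Set ℂ} {z : ℂ}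

lemma differentiableAt_fderiv_of_contDiffAt_two (h : ContDiffAt ℝ 2 φ z) :
    DifferentiableAt ℝ (fderiv ℝ φ) z :=
  (h.fderiv_right (m := 1) (by norm_num)).differentiableAt one_ne_zero

lemma fderiv_fderiv_apply (h : ContDiffAt ℝ 2 φ z) (v w : ℂ) :
    fderiv ℝ (fun x => fderiv ℝ φ x v) z w = fderiv ℝ (fderiv ℝ φ) z w v := by
  rw [((differentiableAt_fderiv_of_contDiffAt_two h).hasFDerivAt.clm_apply
    (hasFDerivAt_const v z)).fderiv]
  simp

lemma lap_eq_laplacian (h : ContDiffAt ℝ 2 φ z) : lap φ z = Laplacian.laplacian φ z := by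
  rw [InnerProductSpace.laplacian_eq_iteratedFDeriv_complexPlane]
  simp [lap, fderiv_fderiv_apply h, iteratedFDeriv_two_apply]

lemma lap_sub (hφ : ContDiffAt ℝ 2 φ z) (hψ : ContDiffAt ℝ 2 ψ z) :
    lap (fun w => φ w - ψ w) z = lap φ z - lap ψ z := by
  rw [lap_eq_laplacian hφ, lap_eq_laplacian hψ, lap_eq_laplacian (hφ.sub hψ)]
  exact hφ.laplacian_sub hψ

lemma lap_const_mul (a : ℝ) (hφ : ContDiffAt ℝ 2 φ z) :
    lap (fun w => a * φ w) z = a * lap φ z := by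
  rw [lap_eq_laplacian hφ, lap_eq_laplacian (contDiffAt_const.mul hφ)]
  exact InnerProductSpace.laplacian_smul a hφ

lemma lap_congr (h : φ =ᶠ[𝓝 z] ψ) : lap φ z = lap ψ z := by
  have hfderiv (v : ℂ) : (fun x => fderiv ℝ φ x v) =ᶠ[𝓝 z] fun x => fderiv ℝ ψ x v := by
    filter_upwards [h.eventuallyEq_nhds] with x hx
    rw [hx.fderiv_eq]
  simp only [lap, (hfderiv _).fderiv_eq]

lemma lap_eq_zero_of_eventuallyEq_const {c : ℝ} (h : φ =ᶠ[𝓝 z] fun _ => c) : lap φ z = 0 := by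
  rw [lap_congr h]
  simp [lap]

lemma lap_eq_zero_of_notMem_tsupport (hz : z ∉ tsupport φ) : lap φ z = 0 :=
  lap_eq_zero_of_eventuallyEq_const (notMem_tsupport_iff_eventuallyEq.1 hz)

lemma tsupport_lap_subset : tsupport (lap φ) ⊆ tsupport φ :=
  closure_minimal (fun _ hz => by_contra fun h => hz (lap_eq_zero_of_notMem_tsupport h))
    (isClosed_tsupport φ)

lemma continuousOn_lap (hs : IsOpen s) (h : ContDiffOn ℝ 2 φ s) : ContinuousOn (lap φ) s := by
  have hcont : ContinuousOn (fderiv ℝ (fderiv ℝ φ)) s :=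
    ((h.fderiv_of_isOpen (m := 1) hs (by norm_num)).fderiv_of_isOpen (m := 0) hs
      (by norm_num)).continuousOn
  have hsum : ContinuousOn
      (fun z => fderiv ℝ (fderiv ℝ φ) z 1 1 + fderiv ℝ (fderiv ℝ φ) z I I) s := by
    fun_prop
  refine hsum.congr fun z hz => ?_
  simp only [lap, fderiv_fderiv_apply (h.contDiffAt (hs.mem_nhds hz))]

lemma continuous_lap (h : ContDiff ℝ 2 φ) : Continuous (lap φ) :=
  continuousOn_univ.1 (continuousOn_lap isOpen_univ h.contDiffOn)

lemma lap_comp {g g' : ℝ → ℝ} {g'' : ℝ} (hφ : ContDiffAt ℝ 2 φ z)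
    (hg : ∀ᶠ x in 𝓝 (φ z), HasDerivAt g (g' x) x) (hg' : HasDerivAt g' g'' (φ z)) :
    lap (fun w => g (φ w)) z =
      g'' * (fderiv ℝ φ z 1 ^ 2 + fderiv ℝ φ z I ^ 2) + g' (φ z) * lap φ z := by
  have hdiff : ∀ᶠ w in 𝓝 z, DifferentiableAt ℝ φ w :=
    (hφ.eventually (by simp)).mono fun w hw => hw.differentiableAt two_ne_zero
  have hfst (v : ℂ) :
      (fun w => fderiv ℝ (fun w => g (φ w)) w v) =ᶠ[𝓝 z] fun w => g' (φ w) * fderiv ℝ φ w v := by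
    filter_upwards [hdiff, hφ.continuousAt.eventually hg] with w hw hgw
    refine (congrArg (fun L => L v) (hgw.comp_hasFDerivAt w hw.hasFDerivAt).fderiv).trans ?_
    simp
  have hsnd (v : ℂ) : fderiv ℝ (fun w => fderiv ℝ (fun w => g (φ w)) w v) z v =
      g'' * fderiv ℝ φ z v ^ 2 + g' (φ z) * fderiv ℝ (fun w => fderiv ℝ φ w v) z v := by
    have hdv : DifferentiableAt ℝ (fun w => fderiv ℝ φ w v) z :=
      (differentiableAt_fderiv_of_contDiffAt_two hφ).clm_apply (differentiableAt_const v)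
    have hprod := (hg'.comp_hasFDerivAt z hdiff.self_of_nhds.hasFDerivAt).mul hdv.hasFDerivAt
    rw [(hfst v).fderiv_eq]
    refine (congrArg (fun L => L v) hprod.fderiv).trans ?_
    simp
    ring
  simp only [lap, hsnd]
  ring

lemma fderiv_holomorphic_norm_sq_apply {f : ℂ → ℂ} (hf : DifferentiableAt ℂ f z) (v : ℂ) :
    fderiv ℝ (fun w => ‖f w‖ ^ 2) z v = 2 * inner ℝ (f z) (deriv f z * v) := by
  rw [((hf.hasDerivAt.complexToReal_fderiv).norm_sq).fderiv]
  simp [-Complex.inner, mul_comm]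

lemma lap_holomorphic_norm_sq {f : ℂ → ℂ} (hf : AnalyticAt ℂ f z) :
    lap (fun w => ‖f w‖ ^ 2) z = 4 * ‖deriv f z‖ ^ 2 := by
  have hsnd (v : ℂ) : fderiv ℝ (fun w => fderiv ℝ (fun w => ‖f w‖ ^ 2) w v) z v =
      2 * (‖deriv f z * v‖ ^ 2 + inner ℝ (f z) (deriv (deriv f) z * v * v)) := by
    have hfst : (fun w => fderiv ℝ (fun w => ‖f w‖ ^ 2) w v) =ᶠ[𝓝 z]
        fun w => 2 * inner ℝ (f w) (deriv f w * v) := by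
      filter_upwards [hf.eventually_analyticAt] with w hw
      exact fderiv_holomorphic_norm_sq_apply hw.differentiableAt v
    have hf' := hf.differentiableAt.hasDerivAt.complexToReal_fderiv
    have hf'' := (hf.deriv.differentiableAt.hasDerivAt.mul_const v).complexToReal_fderiv
    rw [hfst.fderiv_eq, ((hf'.inner ℝ hf'').const_mul 2).fderiv]
    simp [-Complex.inner, mul_comm]
    ring
  simp only [lap, hsnd]
  simp [mul_assoc]
  ring

lemma sq_fderiv_holomorphic_norm_sq_add_sq {f : ℂ → ℂ} (hf : DifferentiableAt ℂ f z) :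
    fderiv ℝ (fun w => ‖f w‖ ^ 2) z 1 ^ 2 + fderiv ℝ (fun w => ‖f w‖ ^ 2) z I ^ 2 =
      4 * ‖f z‖ ^ 2 * ‖deriv f z‖ ^ 2 := by
  rw [fderiv_holomorphic_norm_sq_apply hf, fderiv_holomorphic_norm_sq_apply hf]
  simp only [Complex.inner, Complex.sq_norm, Complex.normSq_apply]
  simp
  ring

end Laplacian

section MaximumPrinciple

lemma deriv_deriv_nonpos_of_isLocalMax {g : ℝ → ℝ} {a : ℝ} (hg : ContinuousAt g a)
    (hmax : IsLocalMax g a) : deriv (deriv g) a ≤ 0 := by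
  by_contra! hpos
  have hmin : IsLocalMin g a := isLocalMin_of_deriv_deriv_pos hpos hmax.deriv_eq_zero hg
  have hconst : g =ᶠ[𝓝 a] fun _ => g a := by
    filter_upwards [hmin, hmax] with t hge hle using le_antisymm hle hge
  have hderiv : deriv g =ᶠ[𝓝 a] fun _ => 0 := by
    filter_upwards [hconst.eventuallyEq_nhds] with t ht
    rw [ht.deriv_eq, deriv_const]
  rw [hderiv.deriv_eq, deriv_const] at hpos
  exact hpos.false

lemma deriv_deriv_add_mul {φ : ℂ → ℝ} {z : ℂ} (hφ : ContDiffAt ℝ 2 φ z) (v : ℂ) :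
    deriv (deriv fun t : ℝ => φ (z + t * v)) 0 = fderiv ℝ (fun x => fderiv ℝ φ x v) z v := by
  have hline (t : ℝ) : HasDerivAt (fun t : ℝ => z + t * v) v t := by
    simpa using ((hasDerivAt_id t).ofReal_comp.mul_const v).const_add z
  have hline₀ : Tendsto (fun t : ℝ => z + t * v) (𝓝 0) (𝓝 z) := by
    simpa using (hline 0).continuousAt.tendsto
  have hdiff : ∀ᶠ x in 𝓝 z, DifferentiableAt ℝ φ x :=
    (hφ.eventually (by simp)).mono fun x hx => hx.differentiableAt two_ne_zero
  have hfst : deriv (fun t : ℝ => φ (z + t * v)) =ᶠ[𝓝 0] fun t : ℝ => fderiv ℝ φ (z + t * v) v := by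
    filter_upwards [hline₀.eventually hdiff] with t ht
    exact (ht.hasFDerivAt.comp_hasDerivAt t (hline t)).deriv
  have hdv : DifferentiableAt ℝ (fun x => fderiv ℝ φ x v) (z + (0 : ℝ) * v) := by
    simpa using (differentiableAt_fderiv_of_contDiffAt_two hφ).clm_apply (differentiableAt_const v)
  rw [hfst.deriv_eq]
  refine (hdv.hasFDerivAt.comp_hasDerivAt (0 : ℝ) (hline 0)).deriv.trans ?_
  simp

lemma lap_nonpos_of_isLocalMax {φ : ℂ → ℝ} {z : ℂ} (hφ : ContDiffAt ℝ 2 φ z)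
    (hmax : IsLocalMax φ z) : lap φ z ≤ 0 := by
  have hdir (v : ℂ) : fderiv ℝ (fun x => fderiv ℝ φ x v) z v ≤ 0 := by
    have hcont : ContinuousAt (fun t : ℝ => z + t * v) 0 := by fun_prop
    rw [← deriv_deriv_add_mul hφ v]
    apply deriv_deriv_nonpos_of_isLocalMax
    · exact ContinuousAt.comp (g := φ) (by simpa using hφ.continuousAt) hcont
    · exact IsLocalMax.comp_continuous (f := φ) (by simpa using hmax) hcont
  exact add_nonpos (hdir 1) (hdir I)

lemma le_of_lap_pos_of_frontier_le {K : Set ℂ} {φ : ℂ → ℝ} {b : ℝ} (hK : IsCompact K)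
    (hcont : ContinuousOn φ K) (hφ : ContDiffOn ℝ 2 φ (interior K))
    (hlap : ∀ z ∈ interior K, 0 < lap φ z) (hfrontier : ∀ z ∈ frontier K, φ z ≤ b) {z : ℂ}
    (hz : z ∈ K) : φ z ≤ b := by
  obtain ⟨m, hm, hmax⟩ := hK.exists_isMaxOn ⟨z, hz⟩ hcont
  have hm_frontier : m ∈ frontier K := by
    refine ⟨subset_closure hm, fun hm_int => (hlap m hm_int).not_ge ?_⟩
    exact lap_nonpos_of_isLocalMax (hφ.contDiffAt (isOpen_interior.mem_nhds hm_int))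
      (hmax.isLocalMax (mem_interior_iff_mem_nhds.1 hm_int))
  exact (hmax hz).trans (hfrontier m hm_frontier)

end MaximumPrinciple

/-- `C²` functions with compact support in `Ω`, the test functions of `IsRieszMeasure`. -/
structure IsTestFunction (Ω : Set ℂ) (φ : ℂ → ℝ) : Prop where
  contDiff : ContDiff ℝ 2 φ
  hasCompactSupport : HasCompactSupport φ
  tsupport_subset : tsupport φ ⊆ Ω

section TestFunctions

variable {Ω K : Set ℂ} {φ h : ℂ → ℝ}

lemma exists_isTestFunction_eq_one_nhdsSet (hΩ : IsOpen Ω) (hK : IsCompact K) (hKΩ : K ⊆ Ω) :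
    ∃ χ, IsTestFunction Ω χ ∧ (∀ᶠ z in 𝓝ˢ K, χ z = 1) ∧ ∀ z, χ z ∈ Icc (0 : ℝ) 1 := by
  obtain ⟨L, hL, hKL, hLΩ⟩ := exists_compact_between hK hΩ hKΩ
  obtain ⟨χ, hχ_one, hχ_zero, hχ_mem⟩ :=
    exists_contMDiffMap_one_nhds_of_subset_interior (n := 2) (modelWithCornersSelf ℝ ℂ)
      hK.isClosed hKL
  have hsupport : tsupport χ ⊆ L :=
    closure_minimal (fun _ hz => by_contra fun hzL => hz (hχ_zero _ hzL)) hL.isClosed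
  exact ⟨χ, ⟨χ.contMDiff.contDiff, hL.of_isClosed_subset (isClosed_tsupport _) hsupport,
    hsupport.trans hLΩ⟩, hχ_one, hχ_mem⟩

lemma continuous_mul_of_tsupport_subset (hΩ : IsOpen Ω) (hh : ContinuousOn h Ω)
    (hφ : Continuous φ) (hφΩ : tsupport φ ⊆ Ω) : Continuous fun z => h z * φ z :=
  continuous_of_tsupport fun _ hz =>
    (hh.continuousAt (hΩ.mem_nhds (hφΩ (tsupport_mul_subset_right hz)))).mul hφ.continuousAt

lemma integrable_mul_of_tsupport_subset (hΩ : IsOpen Ω) (hh : ContinuousOn h Ω)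
    (hφ : Continuous φ) (hφc : HasCompactSupport φ) (hφΩ : tsupport φ ⊆ Ω) :
    Integrable fun z => h z * φ z :=
  (continuous_mul_of_tsupport_subset hΩ hh hφ hφΩ).integrable_of_hasCompactSupport hφc.mul_left

lemma setIntegral_mul_eq_integral_of_tsupport_subset (hφΩ : tsupport φ ⊆ Ω) :
    ∫ z in Ω, h z * φ z = ∫ z, h z * φ z :=
  setIntegral_eq_integral_of_forall_compl_eq_zero fun z hz => by
    rw [image_eq_zero_of_notMem_tsupport fun h => hz (hφΩ h), mul_zero]

lemma integral_mul_fderiv_apply_eq_neg (hΩ : IsOpen Ω) (hh : ContDiffOn ℝ 1 h Ω)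
    (hφ : ContDiff ℝ 1 φ) (hφc : HasCompactSupport φ) (hφΩ : tsupport φ ⊆ Ω) (v : ℂ) :
    ∫ z, h z * fderiv ℝ φ z v = -∫ z, fderiv ℝ h z v * φ z := by
  have hh' : ContinuousOn (fun z => fderiv ℝ h z v) Ω :=
    (hh.continuousOn_fderiv_of_isOpen hΩ le_rfl).clm_apply continuousOn_const
  have hφ' : Continuous fun z => fderiv ℝ φ z v :=
    (hφ.continuous_fderiv one_ne_zero).clm_apply continuous_const
  exact integral_mul_fderiv_eq_neg_fderiv_mul_of_integrable
    (integrable_mul_of_tsupport_subset hΩ hh' hφ.continuous hφc hφΩ)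
    (integrable_mul_of_tsupport_subset hΩ hh.continuousOn hφ' (hφc.fderiv_apply ℝ v)
      ((tsupport_fderiv_apply_subset ℝ v).trans hφΩ))
    (integrable_mul_of_tsupport_subset hΩ hh.continuousOn hφ.continuous hφc hφΩ)
    (fun z hz => (hh.contDiffAt (hΩ.mem_nhds (hφΩ hz))).differentiableAt one_ne_zero)
    (fun z _ => hφ.differentiable one_ne_zero z)

namespace IsTestFunction

lemma mul_contDiffOn (hφ : IsTestFunction Ω φ) (hΩ : IsOpen Ω) (hh : ContDiffOn ℝ 2 h Ω) :
    IsTestFunction Ω fun z => h z * φ z where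
  contDiff := by
    refine contDiff_iff_contDiffAt.2 fun z => ?_
    by_cases hz : z ∈ tsupport φ
    · exact (hh.contDiffAt (hΩ.mem_nhds (hφ.tsupport_subset hz))).mul hφ.contDiff.contDiffAt
    · refine contDiffAt_const (c := (0 : ℝ)) |>.congr_of_eventuallyEq ?_
      filter_upwards [notMem_tsupport_iff_eventuallyEq.1 hz] with w hw
      simp [hw]
  hasCompactSupport := hφ.hasCompactSupport.mul_left
  tsupport_subset := tsupport_mul_subset_right.trans hφ.tsupport_subset

lemma integrable_mul (hφ : IsTestFunction Ω φ) (hΩ : IsOpen Ω) (hh : ContinuousOn h Ω) :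
    Integrable fun z => h z * φ z :=
  integrable_mul_of_tsupport_subset hΩ hh hφ.contDiff.continuous hφ.hasCompactSupport
    hφ.tsupport_subset

lemma integrable_mul_lap (hφ : IsTestFunction Ω φ) (hΩ : IsOpen Ω) (hh : ContinuousOn h Ω) :
    Integrable fun z => h z * lap φ z :=
  integrable_mul_of_tsupport_subset hΩ hh (continuous_lap hφ.contDiff)
    (hφ.hasCompactSupport.mono' (subset_closure.trans tsupport_lap_subset))
    (tsupport_lap_subset.trans hφ.tsupport_subset)

lemma integral_mul_lap (hφ : IsTestFunction Ω φ) (hΩ : IsOpen Ω) (hh : ContDiffOn ℝ 2 h Ω) :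
    ∫ z, h z * lap φ z = ∫ z, lap h z * φ z := by
  have hh' (v : ℂ) : ContDiffOn ℝ 1 (fun x => fderiv ℝ h x v) Ω :=
    (hh.fderiv_of_isOpen hΩ (by norm_num)).clm_apply contDiffOn_const
  have hφ' (v : ℂ) : ContDiff ℝ 1 (fun x => fderiv ℝ φ x v) :=
    (hφ.contDiff.fderiv_right (by norm_num)).clm_apply contDiff_const
  have hφ'c (v : ℂ) : HasCompactSupport fun x => fderiv ℝ φ x v :=
    hφ.hasCompactSupport.fderiv_apply ℝ v
  have hφ'Ω (v : ℂ) : tsupport (fun x => fderiv ℝ φ x v) ⊆ Ω :=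
    (tsupport_fderiv_apply_subset ℝ v).trans hφ.tsupport_subset
  have hdir (v : ℂ) : ∫ z, h z * fderiv ℝ (fun x => fderiv ℝ φ x v) z v =
      ∫ z, fderiv ℝ (fun x => fderiv ℝ h x v) z v * φ z := by
    rw [integral_mul_fderiv_apply_eq_neg hΩ (hh.of_le one_le_two) (hφ' v) (hφ'c v) (hφ'Ω v),
      integral_mul_fderiv_apply_eq_neg hΩ (hh' v) (hφ.contDiff.of_le one_le_two)
        hφ.hasCompactSupport hφ.tsupport_subset, neg_neg]
  have hint_left (v : ℂ) : Integrable fun z => h z * fderiv ℝ (fun x => fderiv ℝ φ x v) z v :=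
    integrable_mul_of_tsupport_subset hΩ hh.continuousOn
      (((hφ' v).continuous_fderiv one_ne_zero).clm_apply continuous_const)
      ((hφ'c v).fderiv_apply ℝ v) ((tsupport_fderiv_apply_subset ℝ v).trans (hφ'Ω v))
  have hint_right (v : ℂ) : Integrable fun z => fderiv ℝ (fun x => fderiv ℝ h x v) z v * φ z :=
    hφ.integrable_mul hΩ
      (((hh' v).continuousOn_fderiv_of_isOpen hΩ le_rfl).clm_apply continuousOn_const)
  simp only [lap, mul_add, add_mul]
  rw [integral_add (hint_left 1) (hint_left I), integral_add (hint_right 1) (hint_right I),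
    hdir, hdir]

end IsTestFunction

end TestFunctions

section SubMeasure

variable {α : Type*} [MeasurableSpace α] {μ ν : Measure α} {K : Set α}

lemma le_sub_add_of_isFiniteMeasure [IsFiniteMeasure μ] [IsFiniteMeasure ν] :
    μ ≤ μ - ν + ν := by
  obtain ⟨s, hs, hνμ, hμν⟩ := hahn_decomposition μ ν
  have hrestrict : (μ - ν).restrict s + ν.restrict s = μ.restrict s := by
    rw [Measure.restrict_sub_eq_restrict_sub_restrict hs]
    refine Measure.sub_add_cancel_of_le (Measure.le_iff.2 fun t ht => ?_)
    rw [Measure.restrict_apply ht, Measure.restrict_apply ht]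
    exact hνμ _ (ht.inter hs) inter_subset_right
  refine Measure.le_iff.2 fun t ht => ?_
  rw [← measure_inter_add_sdiff t hs, ← measure_inter_add_sdiff (μ := μ - ν + ν) t hs]
  gcongr ?_ + ?_
  · rw [← Measure.restrict_apply ht, ← hrestrict, ← Measure.restrict_add, Measure.restrict_apply ht]
  · exact (hμν _ (ht.diff hs) fun x hx => hx.2).trans (Measure.le_add_left le_rfl _)

lemma lintegral_le_lintegral_sub_add (hK : MeasurableSet K) (hμK : μ K ≠ ⊤) (hνK : ν K ≠ ⊤)
    {g : α → ℝ≥0∞} (hg : Function.support g ⊆ K) :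
    ∫⁻ x, g x ∂μ ≤ ∫⁻ x, g x ∂(μ - ν) + ∫⁻ x, g x ∂ν := by
  have : IsFiniteMeasure (μ.restrict K) := isFiniteMeasure_restrict.2 hμK
  have : IsFiniteMeasure (ν.restrict K) := isFiniteMeasure_restrict.2 hνK
  rw [← setLIntegral_eq_of_support_subset (μ := μ) hg,
    ← setLIntegral_eq_of_support_subset (μ := ν) hg,
    ← setLIntegral_eq_of_support_subset (μ := μ - ν) hg,
    Measure.restrict_sub_eq_restrict_sub_restrict hK, ← lintegral_add_measure]
  exact lintegral_mono' le_sub_add_of_isFiniteMeasure le_rfl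

lemma ofReal_integral_le_lintegral {f : α → ℝ} (hf : ∀ x, 0 ≤ f x) :
    ENNReal.ofReal (∫ x, f x ∂μ) ≤ ∫⁻ x, ENNReal.ofReal (f x) ∂μ := by
  by_cases hint : Integrable f μ
  · exact (ofReal_integral_eq_lintegral_ofReal hint (Eventually.of_forall hf)).le
  · simp [integral_undef hint]

lemma measure_lt_top_of_integral_ne_zero {f : α → ℝ} (hf : ∀ x ∈ K, f x = 1)
    (hint : ∫ x, f x ∂μ ≠ 0) : μ K < ⊤ := by
  have hintegrable : Integrable f μ := by_contra fun h => hint (integral_undef h)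
  refine (measure_mono fun x hx => ?_).trans_lt (hintegrable.measure_norm_ge_lt_top one_pos)
  simp [hf x hx]

end SubMeasure

/-- A negative `C²` exhaustion function of the open set `Ω` whose Laplacian is positive. Positivity
rules out that `ν` has infinite mass on a compact set in `IsRieszMeasure`, whose integral against
`ν` would then take the junk value `0`. -/
structure IsStrictExhaustion (u : ℂ → ℝ) (Ω : Set ℂ) : Prop where
  isOpen : IsOpen Ω
  contDiffOn : ContDiffOn ℝ 2 u Ω
  lap_pos : ∀ z ∈ Ω, 0 < lap u z
  neg : ∀ z ∈ Ω, u z < 0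
  exh : ∀ c : ℝ, c < 0 → IsCompact (closure {z | z ∈ Ω ∧ u z < c}) ∧
    closure {z | z ∈ Ω ∧ u z < c} ⊆ Ω

section LelongJensen

variable {Ω K : Set ℂ} {u φ w : ℂ → ℝ} {r : ℝ} {ν νr μ : Measure ℂ}

lemma IsRieszMeasure.integral_eq_integral_lap_mul (hν : IsRieszMeasure u Ω ν) (hΩ : IsOpen Ω)
    (hu : ContDiffOn ℝ 2 u Ω) (hφ : IsTestFunction Ω φ) :
    ∫ z, φ z ∂ν = 4⁻¹ * ∫ z, lap u z * φ z := by
  rw [hν.2 φ hφ.contDiff hφ.hasCompactSupport hφ.tsupport_subset,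
    setIntegral_mul_eq_integral_of_tsupport_subset
      (tsupport_lap_subset.trans hφ.tsupport_subset), hφ.integral_mul_lap hΩ hu]

lemma IsRieszMeasure.integral_max_eq (hν : IsRieszMeasure u Ω ν)
    (hνr : IsRieszMeasure (fun z => max (u z) r) Ω νr) (hΩ : IsOpen Ω) (hu : ContinuousOn u Ω)
    (hφ : IsTestFunction Ω φ) :
    ∫ z, φ z ∂νr = ∫ z, φ z ∂ν + 4⁻¹ * ∫ z in Ω, (max (u z) r - u z) * lap φ z := by
  rw [hν.2 φ hφ.contDiff hφ.hasCompactSupport hφ.tsupport_subset,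
    hνr.2 φ hφ.contDiff hφ.hasCompactSupport hφ.tsupport_subset, ← mul_add, ← integral_add]
  · simp only [sub_mul, add_sub_cancel]
  · exact (hφ.integrable_mul_lap hΩ hu).integrableOn
  · exact (hφ.integrable_mul_lap hΩ ((hu.sup continuousOn_const).sub hu)).integrableOn

namespace IsStrictExhaustion

lemma measurableSet_lt (hu : IsStrictExhaustion u Ω) (r : ℝ) :
    MeasurableSet {z | z ∈ Ω ∧ u z < r} :=
  (hu.contDiffOn.continuousOn.isOpen_inter_preimage hu.isOpen isOpen_Iio).measurableSet

lemma measurableSet_ge (hu : IsStrictExhaustion u Ω) (r : ℝ) :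
    MeasurableSet {z | z ∈ Ω ∧ r ≤ u z} := by
  convert hu.isOpen.measurableSet.diff (hu.measurableSet_lt r) using 1
  ext z
  simp

lemma integral_lap_mul_pos (hu : IsStrictExhaustion u Ω) (hφ : IsTestFunction Ω φ)
    (hφ_nonneg : ∀ z, 0 ≤ φ z) {z₀ : ℂ} (hz₀ : φ z₀ ≠ 0) : 0 < ∫ z, lap u z * φ z := by
  have hsupport {z : ℂ} (hz : φ z ≠ 0) : z ∈ Ω := hφ.tsupport_subset (subset_tsupport φ hz)
  refine Continuous.integral_pos_of_hasCompactSupport_nonneg_nonzero (x := z₀)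
    (continuous_mul_of_tsupport_subset hu.isOpen (continuousOn_lap hu.isOpen hu.contDiffOn)
      hφ.contDiff.continuous hφ.tsupport_subset)
    hφ.hasCompactSupport.mul_left (fun z => ?_)
    (mul_ne_zero (hu.lap_pos z₀ (hsupport hz₀)).ne' hz₀)
  by_cases hz : φ z = 0
  · simp [hz]
  · exact mul_nonneg (hu.lap_pos z (hsupport hz)).le (hφ_nonneg z)

lemma measure_lt_top (hu : IsStrictExhaustion u Ω) (hν : IsRieszMeasure u Ω ν)
    (hK : IsCompact K) (hKΩ : K ⊆ Ω) : ν K < ⊤ := by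
  rcases K.eq_empty_or_nonempty with rfl | ⟨z₀, hz₀⟩
  · simp
  obtain ⟨χ, hχ, hχ_one, hχ_mem⟩ := exists_isTestFunction_eq_one_nhdsSet hu.isOpen hK hKΩ
  have hχK := fun z hz => (eventually_nhdsSet_iff_forall.1 hχ_one z hz).self_of_nhds
  refine measure_lt_top_of_integral_ne_zero hχK ?_
  rw [hν.integral_eq_integral_lap_mul hu.isOpen hu.contDiffOn hχ]
  have := hu.integral_lap_mul_pos hχ (fun z => (hχ_mem z).1) (z₀ := z₀) (by simp [hχK z₀ hz₀])
  positivity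

lemma measure_max_lt_top (hu : IsStrictExhaustion u Ω) (hν : IsRieszMeasure u Ω ν)
    (hνr : IsRieszMeasure (fun z => max (u z) r) Ω νr) (hr : r < 0)
    (hK : IsCompact K) (hKΩ : K ⊆ Ω) : νr K < ⊤ := by
  rcases K.eq_empty_or_nonempty with rfl | ⟨z₀, hz₀⟩
  · simp
  obtain ⟨hB, hBΩ⟩ := hu.exh r hr
  obtain ⟨χ, hχ, hχ_one, hχ_mem⟩ :=
    exists_isTestFunction_eq_one_nhdsSet hu.isOpen (hK.union hB) (union_subset hKΩ hBΩ)
  rw [eventually_nhdsSet_iff_forall] at hχ_one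
  have hχK : ∀ z ∈ K, χ z = 1 := fun z hz => (hχ_one z (Or.inl hz)).self_of_nhds
  have hzero : ∫ z in Ω, (max (u z) r - u z) * lap χ z = 0 := by
    refine setIntegral_eq_zero_of_forall_eq_zero fun z hz => ?_
    rcases lt_or_ge (u z) r with hlt | hge
    · rw [lap_eq_zero_of_eventuallyEq_const (hχ_one z (Or.inr (subset_closure ⟨hz, hlt⟩))),
        mul_zero]
    · rw [max_eq_left hge, sub_self, zero_mul]
  refine measure_lt_top_of_integral_ne_zero hχK ?_
  rw [hν.integral_max_eq hνr hu.isOpen hu.contDiffOn.continuousOn hχ, hzero,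
    hν.integral_eq_integral_lap_mul hu.isOpen hu.contDiffOn hχ]
  have := hu.integral_lap_mul_pos hχ (fun z => (hχ_mem z).1) (z₀ := z₀) (by simp [hχK z₀ hz₀])
  positivity

lemma integrable_of_isTestFunction (hu : IsStrictExhaustion u Ω) (hν : IsRieszMeasure u Ω ν)
    (hφ : IsTestFunction Ω φ) : Integrable φ ν := by
  have : IsFiniteMeasure (ν.restrict (tsupport φ)) := isFiniteMeasure_restrict.2
    (hu.measure_lt_top hν hφ.hasCompactSupport hφ.tsupport_subset).ne
  rw [← integrableOn_iff_integrable_of_support_subset (subset_tsupport φ)]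
  have hint := hφ.contDiff.continuous.continuousOn.integrableOn_compact'
    (μ := ν.restrict (tsupport φ)) hφ.hasCompactSupport.isCompact
    (isClosed_tsupport φ).measurableSet
  rwa [IntegrableOn, Measure.restrict_restrict (isClosed_tsupport φ).measurableSet,
    inter_self] at hint

lemma lintegral_add_le_lintegral_of_isTestFunction (hu : IsStrictExhaustion u Ω)
    (hν : IsRieszMeasure u Ω ν) (hμ : IsMAMeasure u Ω ν r μ) (hr : r < 0)
    (hφ : IsTestFunction Ω φ) (hφ_nonneg : ∀ z, 0 ≤ φ z)
    (hlap : 0 ≤ ∫ z in Ω, (max (u z) r - u z) * lap φ z) :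
    ∫⁻ z in {z | z ∈ Ω ∧ u z < r}, ENNReal.ofReal (φ z) ∂ν +
      ENNReal.ofReal (4⁻¹ * ∫ z in Ω, (max (u z) r - u z) * lap φ z) ≤
    ∫⁻ z, ENNReal.ofReal (φ z) ∂μ := by
  obtain ⟨νr, hνr, rfl⟩ := hμ
  set B := {z | z ∈ Ω ∧ u z < r}
  set E := {z | z ∈ Ω ∧ r ≤ u z}
  set T := ∫ z in Ω, (max (u z) r - u z) * lap φ z
  have hνφ : ENNReal.ofReal (∫ z, φ z ∂ν) = ∫⁻ z, ENNReal.ofReal (φ z) ∂ν :=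
    ofReal_integral_eq_lintegral_ofReal (hu.integrable_of_isTestFunction hν hφ)
      (Eventually.of_forall hφ_nonneg)
  have hE_ne_top : ∫⁻ z in E, ENNReal.ofReal (φ z) ∂ν ≠ ⊤ :=
    ne_top_of_le_ne_top (hνφ ▸ ENNReal.ofReal_ne_top) (setLIntegral_le_lintegral E _)
  have hνK := (hu.measure_lt_top hν hφ.hasCompactSupport hφ.tsupport_subset).ne
  have hνrK := (hu.measure_max_lt_top hν hνr hr hφ.hasCompactSupport hφ.tsupport_subset).ne
  have hsupport : (Function.support fun z => ENNReal.ofReal (φ z)) ⊆ tsupport φ :=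
    fun z hz => subset_tsupport φ fun h => hz (by simp [h])
  refine (ENNReal.add_le_add_iff_left hE_ne_top).1 ?_
  calc ∫⁻ z in E, ENNReal.ofReal (φ z) ∂ν +
        (∫⁻ z in B, ENNReal.ofReal (φ z) ∂ν + ENNReal.ofReal (4⁻¹ * T))
      ≤ ∫⁻ z in E, ENNReal.ofReal (φ z) ∂ν +
        (∫⁻ z in Eᶜ, ENNReal.ofReal (φ z) ∂ν + ENNReal.ofReal (4⁻¹ * T)) := by
        gcongr
        exact fun z hzB hzE => hzB.2.not_ge hzE.2
    _ = ENNReal.ofReal (∫ z, φ z ∂νr) := by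
        rw [← add_assoc, lintegral_add_compl _ (hu.measurableSet_ge r), ← hνφ,
          ← ENNReal.ofReal_add (integral_nonneg hφ_nonneg) (by positivity),
          hν.integral_max_eq hνr hu.isOpen hu.contDiffOn.continuousOn hφ]
    _ ≤ ∫⁻ z, ENNReal.ofReal (φ z) ∂νr := ofReal_integral_le_lintegral hφ_nonneg
    _ ≤ ∫⁻ z, ENNReal.ofReal (φ z) ∂(νr - ν.restrict E) + ∫⁻ z in E, ENNReal.ofReal (φ z) ∂ν :=
        lintegral_le_lintegral_sub_add (isClosed_tsupport φ).measurableSet hνrK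
          (ne_top_of_le_ne_top hνK (Measure.restrict_apply_le _ _)) hsupport
    _ = _ := add_comm _ _

lemma lintegral_add_lintegral_lap_le (hu : IsStrictExhaustion u Ω)
    (hν : IsRieszMeasure u Ω ν) (hμ : IsMAMeasure u Ω ν r μ) (hr : r < 0)
    (hw : ContDiffOn ℝ 2 w Ω) (hw_nonneg : ∀ z, 0 ≤ w z) (hw_lap : ∀ z ∈ Ω, 0 ≤ lap w z) :
    ∫⁻ z in {z | z ∈ Ω ∧ u z < r}, ENNReal.ofReal (w z) ∂ν +
      ENNReal.ofReal 4⁻¹ *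
        ∫⁻ z in {z | z ∈ Ω ∧ u z < r}, ENNReal.ofReal ((r - u z) * lap w z) ≤
    ∫⁻ z, ENNReal.ofReal (w z) ∂μ := by
  obtain ⟨hB, hBΩ⟩ := hu.exh r hr
  obtain ⟨χ, hχ, hχ_one, hχ_mem⟩ := exists_isTestFunction_eq_one_nhdsSet hu.isOpen hB hBΩ
  set B := {z | z ∈ Ω ∧ u z < r}
  set φ : ℂ → ℝ := fun z => w z * χ z
  have hφ : IsTestFunction Ω φ := hχ.mul_contDiffOn hu.isOpen hw
  have hφ_nonneg (z : ℂ) : 0 ≤ φ z := mul_nonneg (hw_nonneg z) (hχ_mem z).1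
  have hφw {z : ℂ} (hz : z ∈ B) : φ =ᶠ[𝓝 z] w := by
    filter_upwards [eventually_nhdsSet_iff_forall.1 hχ_one z (subset_closure hz)] with x hx
    simp [φ, hx]
  have hintegrand {z : ℂ} (hz : z ∈ Ω) : 0 ≤ (max (u z) r - u z) * lap φ z := by
    rcases lt_or_ge (u z) r with hlt | hge
    · rw [lap_congr (hφw ⟨hz, hlt⟩)]
      exact mul_nonneg (sub_nonneg.2 (le_max_left _ _)) (hw_lap z hz)
    · simp [max_eq_left hge]
  have hint : IntegrableOn (fun z => (max (u z) r - u z) * lap φ z) Ω :=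
    have hcont := hu.contDiffOn.continuousOn
    (hφ.integrable_mul_lap hu.isOpen ((hcont.sup continuousOn_const).sub hcont)).integrableOn
  have hB_lap : ∫⁻ z in B, ENNReal.ofReal ((r - u z) * lap w z) ≤
      ENNReal.ofReal (∫ z in Ω, (max (u z) r - u z) * lap φ z) := by
    rw [ofReal_integral_eq_lintegral_ofReal hint
      (ae_restrict_of_forall_mem hu.isOpen.measurableSet fun z hz => hintegrand hz)]
    refine le_trans (setLIntegral_mono' (hu.measurableSet_lt r) fun z hz => ?_)
      (lintegral_mono_set fun z hz => hz.1)
    rw [lap_congr (hφw hz), max_eq_right hz.2.le]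
  have hB_φ : ∫⁻ z in B, ENNReal.ofReal (w z) ∂ν = ∫⁻ z in B, ENNReal.ofReal (φ z) ∂ν :=
    setLIntegral_congr_fun (hu.measurableSet_lt r) fun z hz => by
      simp only [(hφw hz).self_of_nhds]
  calc _ ≤ ∫⁻ z in B, ENNReal.ofReal (φ z) ∂ν +
        ENNReal.ofReal (4⁻¹ * ∫ z in Ω, (max (u z) r - u z) * lap φ z) := by
        rw [hB_φ, ENNReal.ofReal_mul (by norm_num)]
        gcongr
    _ ≤ ∫⁻ z, ENNReal.ofReal (φ z) ∂μ :=
        hu.lintegral_add_le_lintegral_of_isTestFunction hν hμ hr hφ hφ_nonneg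
          (setIntegral_nonneg hu.isOpen.measurableSet fun z hz => hintegrand hz)
    _ ≤ ∫⁻ z, ENNReal.ofReal (w z) ∂μ := lintegral_mono fun z =>
        ENNReal.ofReal_le_ofReal (mul_le_of_le_one_right (hw_nonneg z) (hχ_mem z).2)

lemma setLIntegral_lap_mul_le (hu : IsStrictExhaustion u Ω) (hν : IsRieszMeasure u Ω ν)
    (hw : ContDiffOn ℝ 2 w Ω) (hw_nonneg : ∀ z, 0 ≤ w z) {U : Set ℂ} (hU : IsOpen U)
    (hUΩ : U ⊆ Ω) (hK : IsCompact K) (hKU : K ⊆ U) :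
    ∫⁻ z in K, ENNReal.ofReal (lap u z * w z) ≤ 4 * ∫⁻ z in U, ENNReal.ofReal (w z) ∂ν := by
  obtain ⟨χ, hχ, hχ_one, hχ_mem⟩ := exists_isTestFunction_eq_one_nhdsSet hU hK hKU
  set φ : ℂ → ℝ := fun z => w z * χ z
  have hφ : IsTestFunction Ω φ :=
    IsTestFunction.mul_contDiffOn ⟨hχ.contDiff, hχ.hasCompactSupport,
      hχ.tsupport_subset.trans hUΩ⟩ hu.isOpen hw
  have hφ_nonneg (z : ℂ) : 0 ≤ φ z := mul_nonneg (hw_nonneg z) (hχ_mem z).1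
  have hφ_support : (Function.support fun z => ENNReal.ofReal (φ z)) ⊆ U := fun z hz =>
    hχ.tsupport_subset (subset_tsupport χ fun h => hz (by simp [φ, h]))
  have hlap_nonneg (z : ℂ) : 0 ≤ lap u z * φ z := by
    by_cases hz : φ z = 0
    · simp [hz]
    · exact mul_nonneg (hu.lap_pos z (hφ.tsupport_subset (subset_tsupport φ hz))).le (hφ_nonneg z)
  have hint := hφ.integrable_mul hu.isOpen (continuousOn_lap hu.isOpen hu.contDiffOn)
  calc ∫⁻ z in K, ENNReal.ofReal (lap u z * w z)
      = ∫⁻ z in K, ENNReal.ofReal (lap u z * φ z) :=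
        setLIntegral_congr_fun hK.measurableSet fun z hz => by
          simp [φ, (eventually_nhdsSet_iff_forall.1 hχ_one z hz).self_of_nhds]
    _ ≤ ∫⁻ z, ENNReal.ofReal (lap u z * φ z) := setLIntegral_le_lintegral _ _
    _ = 4 * ENNReal.ofReal (∫ z, φ z ∂ν) := by
        rw [← ofReal_integral_eq_lintegral_ofReal hint (Eventually.of_forall hlap_nonneg),
          hν.integral_eq_integral_lap_mul hu.isOpen hu.contDiffOn hφ,
          ← ENNReal.ofReal_ofNat 4, ← ENNReal.ofReal_mul (by norm_num)]
        congr 1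
        ring
    _ ≤ 4 * ∫⁻ z, ENNReal.ofReal (φ z) ∂ν := by
        gcongr
        exact ofReal_integral_le_lintegral hφ_nonneg
    _ = 4 * ∫⁻ z in U, ENNReal.ofReal (φ z) ∂ν := by
        rw [setLIntegral_eq_of_support_subset hφ_support]
    _ ≤ 4 * ∫⁻ z in U, ENNReal.ofReal (w z) ∂ν := by
        gcongr with z
        exact mul_le_of_le_one_right (hw_nonneg z) (hχ_mem z).2

lemma eventually_two_mul_lt (hu : IsStrictExhaustion u Ω) (hK : IsCompact K) (hKΩ : K ⊆ Ω) :
    ∀ᶠ r in 𝓝[<] (0 : ℝ), ∀ z ∈ K, u z < 2 * r := by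
  rcases K.eq_empty_or_nonempty with rfl | hne
  · simp
  obtain ⟨m, hm, hmax⟩ := hK.exists_isMaxOn hne (hu.contDiffOn.continuousOn.mono hKΩ)
  have hneg := hu.neg m (hKΩ hm)
  filter_upwards [Ioo_mem_nhdsLT (show u m / 2 < 0 by linarith)] with r hr z hz
  have : u z ≤ u m := hmax hz
  linarith [hr.1]

variable {μfam : ℝ → Measure ℂ} {C : ℝ≥0∞}

lemma setLIntegral_lap_mul_le_of_eventually (hu : IsStrictExhaustion u Ω)
    (hν : IsRieszMeasure u Ω ν) (hμ : ∀ r < 0, IsMAMeasure u Ω ν r (μfam r))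
    (hw : ContDiffOn ℝ 2 w Ω) (hw_nonneg : ∀ z, 0 ≤ w z) (hw_lap : ∀ z ∈ Ω, 0 ≤ lap w z)
    (hC : ∀ᶠ r in 𝓝[<] 0, ∫⁻ z, ENNReal.ofReal (w z) ∂μfam r ≤ C)
    (hK : IsCompact K) (hKΩ : K ⊆ Ω) :
    ∫⁻ z in K, ENNReal.ofReal (lap u z * w z) ≤ 4 * C := by
  obtain ⟨r, ⟨hr_mass, hr_lt⟩, hr⟩ :=
    ((hC.and (hu.eventually_two_mul_lt hK hKΩ)).and self_mem_nhdsWithin).exists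
  have hr : r < 0 := hr
  refine (hu.setLIntegral_lap_mul_le hν hw hw_nonneg
    (hu.contDiffOn.continuousOn.isOpen_inter_preimage hu.isOpen isOpen_Iio)
    inter_subset_left hK fun z hz => ⟨hKΩ hz, (hr_lt z hz).trans (by linarith)⟩).trans ?_
  gcongr
  exact le_self_add.trans
    ((hu.lintegral_add_lintegral_lap_le hν (hμ r hr) hr hw hw_nonneg hw_lap).trans hr_mass)

lemma setLIntegral_neg_mul_lap_le_of_eventually (hu : IsStrictExhaustion u Ω)
    (hν : IsRieszMeasure u Ω ν) (hμ : ∀ r < 0, IsMAMeasure u Ω ν r (μfam r))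
    (hw : ContDiffOn ℝ 2 w Ω) (hw_nonneg : ∀ z, 0 ≤ w z) (hw_lap : ∀ z ∈ Ω, 0 ≤ lap w z)
    (hC : ∀ᶠ r in 𝓝[<] 0, ∫⁻ z, ENNReal.ofReal (w z) ∂μfam r ≤ C)
    (hK : IsCompact K) (hKΩ : K ⊆ Ω) :
    ∫⁻ z in K, ENNReal.ofReal (-u z * lap w z) ≤ 8 * C := by
  obtain ⟨r, ⟨hr_mass, hr_lt⟩, hr⟩ :=
    ((hC.and (hu.eventually_two_mul_lt hK hKΩ)).and self_mem_nhdsWithin).exists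
  have hr : r < 0 := hr
  set B := {z | z ∈ Ω ∧ u z < r}
  have hKB : K ⊆ B := fun z hz => ⟨hKΩ hz, (hr_lt z hz).trans (by linarith)⟩
  have hpointwise (z : ℂ) (hz : z ∈ K) :
      ENNReal.ofReal (-u z * lap w z) ≤
        8 * (ENNReal.ofReal 4⁻¹ * ENNReal.ofReal ((r - u z) * lap w z)) := by
    rw [← ENNReal.ofReal_ofNat 8, ← ENNReal.ofReal_mul (by norm_num),
      ← ENNReal.ofReal_mul (by norm_num)]
    refine ENNReal.ofReal_le_ofReal ?_
    nlinarith [mul_nonneg (sub_nonneg.2 (hr_lt z hz).le) (hw_lap z (hKΩ hz))]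
  calc ∫⁻ z in K, ENNReal.ofReal (-u z * lap w z)
      ≤ ∫⁻ z in K, 8 * (ENNReal.ofReal 4⁻¹ * ENNReal.ofReal ((r - u z) * lap w z)) :=
        setLIntegral_mono' hK.measurableSet hpointwise
    _ = 8 * (ENNReal.ofReal 4⁻¹ * ∫⁻ z in K, ENNReal.ofReal ((r - u z) * lap w z)) := by
        rw [lintegral_const_mul' _ _ (by simp), lintegral_const_mul' _ _ (by simp)]
    _ ≤ 8 * C := by
        gcongr
        refine le_trans ?_ ((le_add_self.trans
          (hu.lintegral_add_lintegral_lap_le hν (hμ r hr) hr hw hw_nonneg hw_lap)).trans hr_mass)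
        gcongr

end IsStrictExhaustion

end LelongJensen

/-- `√(1 + ‖f‖²) - 1`: a smooth substitute for `‖f‖`, which is not `C²` at the zeros of `f`,
and still subharmonic for holomorphic `f`. -/
def smoothNorm (f : ℂ → ℂ) (z : ℂ) : ℝ := √(1 + ‖f z‖ ^ 2) - 1

section SmoothNorm

variable {f : ℂ → ℂ} {s : Set ℂ} {z : ℂ}

lemma smoothNorm_nonneg (f : ℂ → ℂ) (z : ℂ) : 0 ≤ smoothNorm f z :=
  sub_nonneg.2 (Real.one_le_sqrt.2 (by simp))

lemma smoothNorm_le_norm (f : ℂ → ℂ) (z : ℂ) : smoothNorm f z ≤ ‖f z‖ :=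
  sub_le_iff_le_add.2 (Real.sqrt_le_iff.2 ⟨by positivity, by nlinarith [norm_nonneg (f z)]⟩)

lemma norm_le_smoothNorm_add_one (f : ℂ → ℂ) (z : ℂ) : ‖f z‖ ≤ smoothNorm f z + 1 := by
  rw [smoothNorm, sub_add_cancel]
  exact Real.le_sqrt_of_sq_le (by linarith)

lemma norm_le_five_mul_smoothNorm (hz : 1 / 2 ≤ ‖f z‖) : ‖f z‖ ≤ 5 * smoothNorm f z := by
  have : 1 + ‖f z‖ / 5 ≤ √(1 + ‖f z‖ ^ 2) := Real.le_sqrt_of_sq_le (by nlinarith)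
  rw [smoothNorm]
  linarith

lemma contDiffOn_smoothNorm (hs : IsOpen s) (hf : DifferentiableOn ℂ f s) :
    ContDiffOn ℝ 2 (smoothNorm f) s :=
  (ContDiffOn.sqrt (contDiffOn_const.add (((hf.contDiffOn hs).restrict_scalars ℝ).norm_sq ℝ))
    fun z _ => by positivity).sub contDiffOn_const

lemma lap_smoothNorm_nonneg (hf : AnalyticAt ℂ f z) : 0 ≤ lap (smoothNorm f) z := by
  have hsq : ContDiffAt ℝ 2 (fun w => ‖f w‖ ^ 2) z :=
    (hf.contDiffAt.restrict_scalars ℝ).norm_sq ℝ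
  set R := √(1 + ‖f z‖ ^ 2)
  have hR : 0 < R := Real.sqrt_pos.2 (by positivity)
  have hR_sq : R ^ 2 = 1 + ‖f z‖ ^ 2 := Real.sq_sqrt (by positivity)
  have hg (x : ℝ) (hx : 0 < 1 + x) : HasDerivAt (fun x => √(1 + x)) (2 * √(1 + x))⁻¹ x := by
    simpa using ((hasDerivAt_id x).const_add 1).sqrt hx.ne'
  have hg' : HasDerivAt (fun x => (2 * √(1 + x))⁻¹) (-(1 / (4 * R ^ 3))) (‖f z‖ ^ 2) := by
    refine (((hg (‖f z‖ ^ 2) (by positivity)).const_mul 2).inv (by positivity)).congr_deriv ?_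
    change -(2 * (2 * R)⁻¹) / (2 * R) ^ 2 = _
    field_simp
    norm_num
  have hlap := lap_comp hsq (g := fun x => √(1 + x) - 1)
    (by filter_upwards [Ioi_mem_nhds (neg_one_lt_zero.trans_le (sq_nonneg ‖f z‖))] with x hx
        exact (hg x (by linarith [mem_Ioi.1 hx])).sub_const 1) hg'
  rw [lap_holomorphic_norm_sq hf, sq_fderiv_holomorphic_norm_sq_add_sq hf.differentiableAt] at hlap
  have hformula : lap (smoothNorm f) z = ‖deriv f z‖ ^ 2 * (2 + ‖f z‖ ^ 2) / R ^ 3 := by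
    refine hlap.trans ?_
    change _ + (2 * R)⁻¹ * _ = _
    field_simp
    rw [hR_sq]
    ring
  rw [hformula]
  positivity

end SmoothNorm

section Disc

variable {u : ℂ → ℝ} {c : ℝ}

lemma iUnion_closedBall_one_sub_inv : ⋃ n : ℕ, closedBall (0 : ℂ) (1 - 1 / (n + 1)) = ball 0 1 := by
  ext z
  simp only [mem_iUnion, mem_closedBall_zero_iff, mem_ball_zero_iff]
  refine ⟨fun ⟨n, hn⟩ => hn.trans_lt (sub_lt_self 1 (by positivity)), fun hz => ?_⟩
  obtain ⟨n, hn⟩ := exists_nat_one_div_lt (sub_pos.2 hz)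
  exact ⟨n, by linarith⟩

lemma setLIntegral_ball_le_of_forall_closedBall {g : ℂ → ℝ≥0∞} {C : ℝ≥0∞}
    (h : ∀ s < 1, ∫⁻ z in closedBall 0 s, g z ≤ C) : ∫⁻ z in ball 0 1, g z ≤ C := by
  have hmono : Monotone fun n : ℕ => closedBall (0 : ℂ) (1 - 1 / (n + 1)) := fun m n hmn =>
    closedBall_subset_closedBall (by gcongr)
  rw [← iUnion_closedBall_one_sub_inv, setLIntegral_iUnion_of_directed _ hmono.directed_le]
  exact iSup_le fun n => h _ (sub_lt_self 1 (by positivity))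

lemma lap_norm_sq (z : ℂ) : lap (fun w => ‖w‖ ^ 2) z = 4 := by
  simpa using lap_holomorphic_norm_sq (analyticAt_id (𝕜 := ℂ) (z := z))

lemma le_neg_mul_one_sub_norm_sq_of_le_lap (hcont : ContinuousOn u (closedBall 0 1))
    (hu : ContDiffOn ℝ 2 u (ball 0 1)) (hzero : ∀ z ∈ sphere 0 1, u z = 0) (hc : 0 < c)
    (hlap : ∀ z ∈ ball 0 1, c ≤ lap u z) {z : ℂ} (hz : z ∈ closedBall 0 1) :
    u z ≤ -(c / 8 * (1 - ‖z‖ ^ 2)) := by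
  have hsq : ContDiff ℝ 2 fun w : ℂ => c / 8 * ‖w‖ ^ 2 := contDiff_const.mul (contDiff_norm_sq ℝ)
  have hmax : u z - c / 8 * ‖z‖ ^ 2 ≤ -(c / 8) := by
    refine le_of_lap_pos_of_frontier_le (φ := fun w => u w - c / 8 * ‖w‖ ^ 2)
      (isCompact_closedBall 0 1) (hcont.sub hsq.continuous.continuousOn) ?_ ?_ ?_ hz
    · rw [interior_closedBall _ one_ne_zero]
      exact hu.sub hsq.contDiffOn
    · intro w hw
      rw [interior_closedBall _ one_ne_zero] at hw
      rw [lap_sub (hu.contDiffAt (isOpen_ball.mem_nhds hw)) hsq.contDiffAt,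
        lap_const_mul _ (contDiff_norm_sq ℝ).contDiffAt, lap_norm_sq]
      linarith [hlap w hw]
    · intro w hw
      rw [frontier_closedBall _ one_ne_zero] at hw
      rw [hzero w hw, mem_sphere_zero_iff_norm.1 hw]
      norm_num
  linarith

lemma isStrictExhaustion_ball (hcont : ContinuousOn u (closedBall 0 1))
    (hu : ContDiffOn ℝ 2 u (ball 0 1)) (hzero : ∀ z ∈ sphere 0 1, u z = 0) (hc : 0 < c)
    (hlap : ∀ z ∈ ball 0 1, c ≤ lap u z) : IsStrictExhaustion u (ball 0 1) where
  isOpen := isOpen_ball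
  contDiffOn := hu
  lap_pos z hz := hc.trans_le (hlap z hz)
  neg z hz := by
    refine (le_neg_mul_one_sub_norm_sq_of_le_lap hcont hu hzero hc hlap
      (ball_subset_closedBall hz)).trans_lt (neg_neg_of_pos (mul_pos (by positivity) ?_))
    nlinarith [norm_nonneg z, mem_ball_zero_iff.1 hz]
  exh r hr := by
    have hclosed : IsClosed {z | z ∈ closedBall (0 : ℂ) 1 ∧ u z ≤ r} :=
      hcont.preimage_isClosed_of_isClosed isClosed_closedBall isClosed_Iic
    have hsubset : closure {z | z ∈ ball (0 : ℂ) 1 ∧ u z < r} ⊆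
        {z | z ∈ closedBall (0 : ℂ) 1 ∧ u z ≤ r} :=
      closure_minimal (fun z hz => ⟨ball_subset_closedBall hz.1, hz.2.le⟩) hclosed
    refine ⟨(isCompact_closedBall (0 : ℂ) 1).of_isClosed_subset isClosed_closure
      (hsubset.trans fun z hz => hz.1), fun z hz => ?_⟩
    obtain ⟨hz_mem, hz_le⟩ := hsubset hz
    refine mem_ball.2 ((mem_closedBall.1 hz_mem).lt_of_ne fun h => ?_)
    linarith [hzero z h]

end Disc

section PoletskyStessin

variable {u : ℂ → ℝ} {Ω : Set ℂ} {ν : Measure ℂ} {μfam : ℝ → Measure ℂ} {f : ℂ → ℂ}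

lemma MemPS.exists_eventually_lintegral_smoothNorm_le (hf : MemPS 1 Ω μfam f) :
    ∃ C < ⊤, ∀ᶠ r in 𝓝[<] 0, ∫⁻ z, ENNReal.ofReal (smoothNorm f z) ∂μfam r ≤ C := by
  obtain ⟨C, hC, hC_top⟩ := exists_between hf.2
  refine ⟨C, hC_top, (eventually_lt_of_limsup_lt hC).mono fun r hr => le_trans ?_ hr.le⟩
  refine lintegral_mono fun z => ENNReal.ofReal_le_ofReal ?_
  rw [Real.rpow_one]
  exact smoothNorm_le_norm f z

variable (hu : IsStrictExhaustion u (ball 0 1)) (hν : IsRieszMeasure u (ball 0 1) ν)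
  (hμ : ∀ r < 0, IsMAMeasure u (ball 0 1) ν r (μfam r)) (hf : MemPS 1 (ball 0 1) μfam f)
include hu hν hμ hf

lemma MemPS.setLIntegral_lap_mul_smoothNorm_lt_top :
    ∫⁻ z in ball 0 1, ENNReal.ofReal (lap u z * smoothNorm f z) < ⊤ := by
  obtain ⟨C, hC_top, hC⟩ := hf.exists_eventually_lintegral_smoothNorm_le
  refine (setLIntegral_ball_le_of_forall_closedBall (C := 4 * C) fun s hs => ?_).trans_lt
    (ENNReal.mul_lt_top ENNReal.ofNat_lt_top hC_top)
  exact hu.setLIntegral_lap_mul_le_of_eventually hν hμ (contDiffOn_smoothNorm isOpen_ball hf.1)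
    (smoothNorm_nonneg f) (fun z hz => lap_smoothNorm_nonneg (hf.1.analyticAt
    (isOpen_ball.mem_nhds hz))) hC (isCompact_closedBall 0 s) (closedBall_subset_ball hs)

lemma MemPS.setLIntegral_neg_mul_lap_smoothNorm_lt_top :
    ∫⁻ z in ball 0 1, ENNReal.ofReal (-u z * lap (smoothNorm f) z) < ⊤ := by
  obtain ⟨C, hC_top, hC⟩ := hf.exists_eventually_lintegral_smoothNorm_le
  refine (setLIntegral_ball_le_of_forall_closedBall (C := 8 * C) fun s hs => ?_).trans_lt
    (ENNReal.mul_lt_top ENNReal.ofNat_lt_top hC_top)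
  exact hu.setLIntegral_neg_mul_lap_le_of_eventually hν hμ
    (contDiffOn_smoothNorm isOpen_ball hf.1) (smoothNorm_nonneg f)
    (fun z hz => lap_smoothNorm_nonneg (hf.1.analyticAt (isOpen_ball.mem_nhds hz))) hC
    (isCompact_closedBall 0 s) (closedBall_subset_ball hs)

lemma MemPS.setLIntegral_lap_mul_norm_lt_top (hf_norm : ∀ z ∈ ball 0 1, 1 / 2 ≤ ‖f z‖) :
    ∫⁻ z in ball 0 1, ENNReal.ofReal (lap u z * ‖f z‖) < ⊤ := by
  calc ∫⁻ z in ball 0 1, ENNReal.ofReal (lap u z * ‖f z‖)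
      ≤ ∫⁻ z in ball 0 1, ENNReal.ofReal 5 * ENNReal.ofReal (lap u z * smoothNorm f z) := by
        refine setLIntegral_mono' measurableSet_ball fun z hz => ?_
        rw [← ENNReal.ofReal_mul (by norm_num), mul_left_comm]
        exact ENNReal.ofReal_le_ofReal (mul_le_mul_of_nonneg_left
          (norm_le_five_mul_smoothNorm (hf_norm z hz)) (hu.lap_pos z hz).le)
    _ = ENNReal.ofReal 5 * ∫⁻ z in ball 0 1, ENNReal.ofReal (lap u z * smoothNorm f z) :=
        lintegral_const_mul' _ _ ENNReal.ofReal_ne_top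
    _ < ⊤ := ENNReal.mul_lt_top ENNReal.ofReal_lt_top
        (hf.setLIntegral_lap_mul_smoothNorm_lt_top hu hν hμ)

end PoletskyStessin

/-- The primitive of `Real.smoothTransition` vanishing on the negative axis, a smooth version of
the positive part. -/
def smoothRamp (x : ℝ) : ℝ := ∫ t in (0 : ℝ)..x, Real.smoothTransition t

/-- The derivative of `x ↦ -Real.smoothTransition ((t - x) / δ)`: a probability density on
`[t - δ, t]`, used to approximate circle averages by area integrals. -/
def transitionKernel (t δ x : ℝ) : ℝ := deriv Real.smoothTransition ((t - x) / δ) / δ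

/-- A `C²` regularization at scale `δ` of the function `(t - ‖z‖²)⁺`, which is used as a test
function in Green's formula. -/
def radialTest (t δ : ℝ) (z : ℂ) : ℝ := δ * smoothRamp ((t - ‖z‖ ^ 2) / δ)

section RadialTest

variable {t δ x : ℝ} {z : ℂ}

lemma hasDerivAt_smoothRamp (x : ℝ) : HasDerivAt smoothRamp (Real.smoothTransition x) x :=
  (Real.smoothTransition.continuous.integral_hasStrictDerivAt 0 x).hasDerivAt

lemma contDiff_smoothRamp : ContDiff ℝ 2 smoothRamp := by
  refine (contDiff_succ_iff_deriv (n := 1)).2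
    ⟨fun x => (hasDerivAt_smoothRamp x).differentiableAt, by simp, ?_⟩
  rw [funext fun x => (hasDerivAt_smoothRamp x).deriv]
  exact Real.smoothTransition.contDiff (n := 1)

lemma smoothRamp_of_nonpos (hx : x ≤ 0) : smoothRamp x = 0 := by
  refine intervalIntegral.integral_zero_ae (Eventually.of_forall fun t ht => ?_)
  rw [uIoc_of_ge hx] at ht
  exact Real.smoothTransition.zero_of_nonpos ht.2

lemma smoothRamp_le (hx : 0 ≤ x) : smoothRamp x ≤ x := by
  have := intervalIntegral.integral_mono hx
    (Real.smoothTransition.continuous.intervalIntegrable (μ := volume) 0 x)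
    intervalIntegrable_const Real.smoothTransition.le_one
  simpa [smoothRamp] using this

lemma deriv_smoothTransition_nonneg (x : ℝ) : 0 ≤ deriv Real.smoothTransition x :=
  Real.smoothTransition.monotone.deriv_nonneg

lemma continuous_deriv_smoothTransition : Continuous (deriv Real.smoothTransition) :=
  (Real.smoothTransition.contDiff (n := 1)).continuous_deriv le_rfl

lemma deriv_smoothTransition_of_notMem_Icc (hx : x ∉ Icc 0 1) :
    deriv Real.smoothTransition x = 0 := by
  rw [mem_Icc, not_and_or, not_le, not_le] at hx
  rcases hx with hx | hx
  · have : Real.smoothTransition =ᶠ[𝓝 x] fun _ => 0 := by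
      filter_upwards [Iio_mem_nhds hx] with y hy using
        Real.smoothTransition.zero_of_nonpos (le_of_lt hy)
    rw [this.deriv_eq, deriv_const]
  · have : Real.smoothTransition =ᶠ[𝓝 x] fun _ => 1 := by
      filter_upwards [Ioi_mem_nhds hx] with y hy using
        Real.smoothTransition.one_of_one_le (le_of_lt hy)
    rw [this.deriv_eq, deriv_const]

lemma transitionKernel_nonneg (hδ : 0 ≤ δ) : 0 ≤ transitionKernel t δ x :=
  div_nonneg (deriv_smoothTransition_nonneg _) hδ

lemma continuous_transitionKernel (t δ : ℝ) : Continuous (transitionKernel t δ) :=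
  (continuous_deriv_smoothTransition.comp (by fun_prop)).div_const δ

lemma transitionKernel_of_notMem_Icc (hδ : 0 < δ) (hx : x ∉ Icc (t - δ) t) :
    transitionKernel t δ x = 0 := by
  rw [transitionKernel, deriv_smoothTransition_of_notMem_Icc, zero_div]
  contrapose! hx
  rw [mem_Icc, le_div_iff₀ hδ, div_le_iff₀ hδ] at hx
  constructor <;> linarith [hx.1, hx.2]

lemma hasDerivAt_smoothTransition_comp (t δ x : ℝ) :
    HasDerivAt (fun x => -Real.smoothTransition ((t - x) / δ)) (transitionKernel t δ x) x := by
  have hsmooth : HasDerivAt Real.smoothTransition _ ((t - x) / δ) :=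
    ((Real.smoothTransition.contDiff (n := 1)).differentiable one_ne_zero _).hasDerivAt
  refine (hsmooth.comp x (((hasDerivAt_id x).const_sub t).div_const δ)).neg.congr_deriv ?_
  rw [transitionKernel]
  ring

lemma integral_two_mul_transitionKernel_sq {a b : ℝ} (hab : a ^ 2 < b ^ 2) :
    ∫ τ in a..b, transitionKernel (b ^ 2) (b ^ 2 - a ^ 2) (τ ^ 2) * (2 * τ) = 1 := by
  set δ := b ^ 2 - a ^ 2
  have hδ : δ ≠ 0 := (sub_pos.2 hab).ne'
  have hderiv (τ : ℝ) : HasDerivAt (fun τ => -Real.smoothTransition ((b ^ 2 - τ ^ 2) / δ))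
      (transitionKernel (b ^ 2) δ (τ ^ 2) * (2 * τ)) τ := by
    refine ((hasDerivAt_smoothTransition_comp (b ^ 2) δ (τ ^ 2)).comp τ
      (hasDerivAt_pow 2 τ)).congr_deriv ?_
    simp
  have hcont : Continuous fun τ => transitionKernel (b ^ 2) δ (τ ^ 2) * (2 * τ) :=
    ((continuous_transitionKernel _ _).comp (continuous_pow 2)).mul (by fun_prop)
  rw [intervalIntegral.integral_eq_sub_of_hasDerivAt (fun τ _ => hderiv τ)
    (hcont.intervalIntegrable _ _)]
  simp [δ, div_self hδ]

lemma radialTest_of_le (hδ : 0 < δ) (hz : t ≤ ‖z‖ ^ 2) : radialTest t δ z = 0 := by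
  rw [radialTest, smoothRamp_of_nonpos (div_nonpos_of_nonpos_of_nonneg (by linarith) hδ.le),
    mul_zero]

lemma radialTest_le (hδ : 0 < δ) (hz : ‖z‖ ^ 2 ≤ t) : radialTest t δ z ≤ t - ‖z‖ ^ 2 := by
  have := smoothRamp_le (div_nonneg (sub_nonneg.2 hz) hδ.le)
  rwa [le_div_iff₀' hδ] at this

lemma contDiff_radialTest (t δ : ℝ) : ContDiff ℝ 2 (radialTest t δ) :=
  contDiff_const.mul
    (contDiff_smoothRamp.comp ((contDiff_const.sub (contDiff_norm_sq ℝ)).div_const δ))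

lemma tsupport_subset_closedBall {φ : ℂ → ℝ} {s : ℝ} (hs : 0 ≤ s)
    (hφ : ∀ z, s ^ 2 < ‖z‖ ^ 2 → φ z = 0) : tsupport φ ⊆ closedBall 0 s := by
  refine closure_minimal (fun z hz => mem_closedBall_zero_iff.2 ?_) isClosed_closedBall
  by_contra! h
  exact hz (hφ z (pow_lt_pow_left₀ h hs two_ne_zero))

lemma lap_radialTest (hδ : 0 < δ) : lap (radialTest t δ) z =
    4 * ‖z‖ ^ 2 * transitionKernel t δ (‖z‖ ^ 2) -
      4 * Real.smoothTransition ((t - ‖z‖ ^ 2) / δ) := by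
  have hg (x : ℝ) : HasDerivAt (fun x => δ * smoothRamp ((t - x) / δ))
      (-Real.smoothTransition ((t - x) / δ)) x := by
    refine (((hasDerivAt_smoothRamp ((t - x) / δ)).comp x
      (((hasDerivAt_id x).const_sub t).div_const δ)).const_mul δ).congr_deriv ?_
    field_simp
  have hsq := sq_fderiv_holomorphic_norm_sq_add_sq (differentiableAt_id (𝕜 := ℂ) (x := z))
  have hlap := lap_comp (contDiff_norm_sq (E := ℂ) ℝ).contDiffAt (Eventually.of_forall hg)
    (hasDerivAt_smoothTransition_comp t δ (‖z‖ ^ 2))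
  simp only [id_eq, deriv_id, norm_one, one_pow, mul_one] at hsq
  rw [hsq, lap_norm_sq] at hlap
  exact hlap.trans (by ring)

end RadialTest

section CircleAverage

open Real (circleAverage)

lemma integral_eq_intervalIntegral_circleAverage {g : ℂ → ℝ} {a b : ℝ} (hg : Continuous g)
    (ha : 0 < a) (hab : a ≤ b) (hsupport : ∀ z, ‖z‖ ∉ Icc a b → g z = 0) :
    ∫ z, g z = ∫ τ in a..b, τ * (2 * π * circleAverage g 0 τ) := by
  have hcont : Continuous fun p : ℝ × ℝ => p.1 * g (circleMap 0 p.1 p.2) := by fun_prop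
  have hangle (τ : ℝ) :
      ∫ θ in Ioo (-π) π, g (circleMap 0 τ θ) = 2 * π * circleAverage g 0 τ := by
    rw [Real.circleAverage_eq_integral_add (-π), smul_eq_mul, mul_inv_cancel_left₀ (by positivity),
      intervalIntegral.integral_comp_add_right (fun θ => g (circleMap 0 τ θ)),
      intervalIntegral.integral_of_le (by linarith [Real.pi_pos]), integral_Ioc_eq_integral_Ioo]
    ring_nf
  calc ∫ z, g z
      = ∫ p in Ioi 0 ×ˢ Ioo (-π) π, p.1 * g (circleMap 0 p.1 p.2) := by
        rw [← Complex.integral_comp_polarCoord_symm]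
        simp [polarCoord_target, circleMap, Complex.polarCoord_symm_apply, exp_mul_I]
    _ = ∫ p in Icc a b ×ˢ Ioo (-π) π, p.1 * g (circleMap 0 p.1 p.2) := by
        refine setIntegral_eq_of_subset_of_forall_sdiff_eq_zero
          (measurableSet_Ioi.prod measurableSet_Ioo)
          (prod_mono_left fun τ hτ => ha.trans_le hτ.1) fun p hp => ?_
        rw [hsupport, mul_zero]
        rw [norm_circleMap_zero, abs_of_pos hp.1.1]
        exact fun h => hp.2 ⟨h, hp.1.2⟩
    _ = ∫ τ in Icc a b, ∫ θ in Ioo (-π) π, τ * g (circleMap 0 τ θ) :=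
        setIntegral_prod _ (((hcont.continuousOn.integrableOn_compact
          (isCompact_Icc.prod (isCompact_Icc (a := -π) (b := π)))).mono_set
          (prod_mono_right Ioo_subset_Icc_self)))
    _ = ∫ τ in a..b, τ * (2 * π * circleAverage g 0 τ) := by
        simp only [integral_const_mul, hangle, intervalIntegral.integral_of_le hab,
          integral_Icc_eq_integral_Ioc]

lemma isTestFunction_radialTest {b δ : ℝ} (hb : 0 ≤ b) (hb_lt : b < 1) (hδ : 0 < δ) :
    IsTestFunction (ball 0 1) (radialTest (b ^ 2) δ) := by
  have hsupport : tsupport (radialTest (b ^ 2) δ) ⊆ closedBall 0 b :=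
    tsupport_subset_closedBall hb fun z hz => radialTest_of_le hδ hz.le
  exact ⟨contDiff_radialTest _ _, (isCompact_closedBall 0 b).of_isClosed_subset
    (isClosed_tsupport _) hsupport, hsupport.trans (closedBall_subset_ball hb_lt)⟩

variable {w : ℂ → ℝ}

lemma exists_integral_mul_transitionKernel_eq (hw : ContinuousOn w (ball 0 1)) {a b : ℝ}
    (ha : 0 < a) (hab : a < b) (hb : b < 1) :
    ∃ τ ∈ Icc a b,
      ∫ z, w z * (4 * ‖z‖ ^ 2 * transitionKernel (b ^ 2) (b ^ 2 - a ^ 2) (‖z‖ ^ 2)) =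
        4 * π * τ ^ 2 * circleAverage w 0 τ := by
  set κ := transitionKernel (b ^ 2) (b ^ 2 - a ^ 2)
  have hsq : a ^ 2 < b ^ 2 := pow_lt_pow_left₀ hab ha.le two_ne_zero
  have hκ_cont : Continuous κ := continuous_transitionKernel _ _
  have hκ_zero {x : ℝ} (hx : x ∉ Icc (a ^ 2) (b ^ 2)) : κ x = 0 :=
    transitionKernel_of_notMem_Icc (sub_pos.2 hsq) (by rwa [sub_sub_cancel])
  have hg_cont : Continuous fun z => w z * (4 * ‖z‖ ^ 2 * κ (‖z‖ ^ 2)) := by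
    refine continuous_mul_of_tsupport_subset isOpen_ball hw (by fun_prop)
      ((tsupport_subset_closedBall (ha.trans hab).le fun z hz => ?_).trans
        (closedBall_subset_ball hb))
    rw [hκ_zero fun h => hz.not_ge h.2, mul_zero]
  have haverage (τ : ℝ) : circleAverage (fun z => w z * (4 * ‖z‖ ^ 2 * κ (‖z‖ ^ 2))) 0 τ =
      4 * τ ^ 2 * κ (τ ^ 2) * circleAverage w 0 τ := by
    rw [← smul_eq_mul, ← Real.circleAverage_fun_smul]
    refine Real.circleAverage_congr_sphere fun z hz => ?_
    simp only [mem_sphere_zero_iff_norm.1 hz, sq_abs, smul_eq_mul]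
    ring
  have hw_average : ContinuousOn (circleAverage w 0) (Icc a b) :=
    Real.ContinuousOn.circleAverage (hw.mono fun z hz => by simpa using hz.2.trans_lt hb)
      fun τ hτ => ha.le.trans hτ.1
  obtain ⟨τ, hτ, hmean⟩ := exists_eq_const_mul_intervalIntegral_of_nonneg (μ := volume)
    (f := fun τ => 4 * π * τ ^ 2 * circleAverage w 0 τ) (g := fun τ => κ (τ ^ 2) * (2 * τ))
    (a := a) (b := b) (by rw [uIcc_of_le hab.le]; fun_prop)
    (Continuous.intervalIntegrable (by fun_prop) _ _) fun τ hτ => by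
      rw [uIoc_of_le hab.le] at hτ
      exact mul_nonneg (transitionKernel_nonneg (sub_pos.2 hsq).le) (by linarith [hτ.1])
  rw [integral_two_mul_transitionKernel_sq hsq, mul_one] at hmean
  refine ⟨τ, uIcc_of_le hab.le ▸ hτ, ?_⟩
  rw [← hmean, integral_eq_intervalIntegral_circleAverage hg_cont ha hab.le]
  · refine intervalIntegral.integral_congr fun τ _ => ?_
    simp only [haverage]
    ring
  · intro z hz
    rw [hκ_zero fun h => hz ⟨?_, ?_⟩, mul_zero, mul_zero]
    · exact le_of_sq_le_sq h.1 (norm_nonneg z)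
    · exact le_of_sq_le_sq h.2 (ha.trans hab).le

section Bounded

variable (hw : ContDiffOn ℝ 2 w (ball 0 1)) (hw_nonneg : ∀ z, 0 ≤ w z)
  (hw_lap : ∀ z ∈ ball 0 1, 0 ≤ lap w z) (hw_int : IntegrableOn w (ball 0 1))
  (hlap_int : IntegrableOn (fun z => (1 - ‖z‖ ^ 2) * lap w z) (ball 0 1))
include hw hw_nonneg hw_lap hw_int hlap_int

lemma integral_mul_transitionKernel_le {b δ : ℝ} (hb : 0 ≤ b) (hb_lt : b < 1) (hδ : 0 < δ) :
    ∫ z, w z * (4 * ‖z‖ ^ 2 * transitionKernel (b ^ 2) δ (‖z‖ ^ 2)) ≤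
      (∫ z in ball 0 1, (1 - ‖z‖ ^ 2) * lap w z) + 4 * ∫ z in ball 0 1, w z := by
  have hφ := isTestFunction_radialTest hb hb_lt hδ
  set φ := radialTest (b ^ 2) δ
  set S : ℂ → ℝ := fun z => Real.smoothTransition ((b ^ 2 - ‖z‖ ^ 2) / δ)
  have hS_support : tsupport S ⊆ closedBall 0 b := tsupport_subset_closedBall hb fun z hz =>
    Real.smoothTransition.zero_of_nonpos (div_nonpos_of_nonpos_of_nonneg (by linarith) hδ.le)
  have hball := closedBall_subset_ball (x := (0 : ℂ)) hb_lt
  have hS_int : Integrable fun z => w z * S z :=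
    integrable_mul_of_tsupport_subset isOpen_ball hw.continuousOn
      (Real.smoothTransition.continuous.comp (by fun_prop))
      ((isCompact_closedBall 0 b).of_isClosed_subset (isClosed_tsupport S) hS_support)
      (hS_support.trans hball)
  have hφ_le {z : ℂ} (hz : z ∈ ball 0 1) : φ z ≤ 1 - ‖z‖ ^ 2 := by
    rw [mem_ball_zero_iff] at hz
    rcases le_total (‖z‖ ^ 2) (b ^ 2) with h | h
    · exact (radialTest_le hδ h).trans (by nlinarith)
    · rw [show φ z = 0 from radialTest_of_le hδ h]
      nlinarith [norm_nonneg z]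
  have hgreen : ∫ z, w z * lap φ z ≤ ∫ z in ball 0 1, (1 - ‖z‖ ^ 2) * lap w z := by
    rw [hφ.integral_mul_lap isOpen_ball hw,
      ← setIntegral_mul_eq_integral_of_tsupport_subset hφ.tsupport_subset]
    refine setIntegral_mono_on (hφ.integrable_mul isOpen_ball
      (continuousOn_lap isOpen_ball hw)).integrableOn hlap_int measurableSet_ball fun z hz => ?_
    rw [mul_comm]
    exact mul_le_mul_of_nonneg_right (hφ_le hz) (hw_lap z hz)
  have hmass : ∫ z, w z * S z ≤ ∫ z in ball 0 1, w z := by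
    rw [← setIntegral_mul_eq_integral_of_tsupport_subset (hS_support.trans hball)]
    exact setIntegral_mono_on hS_int.integrableOn hw_int measurableSet_ball fun z _ =>
      mul_le_of_le_one_right (hw_nonneg z) (Real.smoothTransition.le_one _)
  have hsplit (z : ℂ) : w z * (4 * ‖z‖ ^ 2 * transitionKernel (b ^ 2) δ (‖z‖ ^ 2)) =
      w z * lap φ z + 4 * (w z * S z) := by
    rw [lap_radialTest hδ]
    ring
  simp only [hsplit]
  rw [integral_add (hφ.integrable_mul_lap isOpen_ball hw.continuousOn) (hS_int.const_mul 4),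
    integral_const_mul]
  gcongr

lemma sq_mul_circleAverage_le {r : ℝ} (hr : 0 < r) (hr_lt : r < 1) :
    4 * π * r ^ 2 * circleAverage w 0 r ≤
      (∫ z in ball 0 1, (1 - ‖z‖ ^ 2) * lap w z) + 4 * ∫ z in ball 0 1, w z := by
  by_contra! hlt
  have hcont : ContinuousOn (circleAverage w 0) (Ico 0 1) :=
    Real.ContinuousOn.circleAverage (hw.continuousOn.mono fun z hz => by simpa using hz.2)
      fun τ hτ => hτ.1
  have hcont_at : ContinuousAt (fun τ => 4 * π * τ ^ 2 * circleAverage w 0 τ) r :=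
    (by fun_prop : Continuous fun τ => 4 * π * τ ^ 2).continuousAt.mul
      (hcont.continuousAt (Ico_mem_nhds hr hr_lt))
  obtain ⟨b, hrb, hb⟩ := mem_nhdsGE_iff_exists_Icc_subset.1
    (inter_mem (mem_nhdsWithin_of_mem_nhds (hcont_at.eventually (lt_mem_nhds hlt)))
      (mem_nhdsWithin_of_mem_nhds (Iio_mem_nhds hr_lt)))
  have hb_lt : b < 1 := (hb (right_mem_Icc.2 (le_of_lt hrb))).2
  obtain ⟨τ, hτ, hmean⟩ :=
    exists_integral_mul_transitionKernel_eq hw.continuousOn hr hrb hb_lt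
  exact (hb hτ).1.not_ge (hmean ▸ integral_mul_transitionKernel_le hw hw_nonneg hw_lap hw_int
    hlap_int (hr.trans hrb).le hb_lt (sub_pos.2 (pow_lt_pow_left₀ hrb hr.le two_ne_zero)))

lemma exists_circleAverage_le : ∃ M, ∀ r ∈ Ico 0 1, circleAverage w 0 r ≤ M := by
  have hcont : ContinuousOn (circleAverage w 0) (Icc 0 (1 / 2)) :=
    Real.ContinuousOn.circleAverage (hw.continuousOn.mono fun z hz => by
      simpa using hz.2.trans_lt one_half_lt_one) fun τ hτ => hτ.1
  obtain ⟨M, hM⟩ := isCompact_Icc.bddAbove_image hcont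
  set D := (∫ z in ball 0 1, (1 - ‖z‖ ^ 2) * lap w z) + 4 * ∫ z in ball 0 1, w z
  refine ⟨max M (D / π), fun r hr => ?_⟩
  rcases le_total r (1 / 2) with hr_half | hr_half
  · exact le_max_of_le_left (hM (mem_image_of_mem _ ⟨hr.1, hr_half⟩))
  · refine le_max_of_le_right ((le_div_iff₀' Real.pi_pos).2 (le_trans ?_
      (sq_mul_circleAverage_le hw hw_nonneg hw_lap hw_int hlap_int (by linarith) hr.2)))
    have haverage : 0 ≤ circleAverage w 0 r :=
      Real.circleAverage_nonneg_of_nonneg fun z _ => hw_nonneg z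
    have hsq : 1 ≤ 4 * r ^ 2 := by nlinarith
    exact mul_le_mul_of_nonneg_right (by nlinarith [Real.pi_pos]) haverage

end Bounded

end CircleAverage

section HardySpace

open Real (circleAverage)

variable {f : ℂ → ℂ}

lemma memH1Disc_of_circleAverage_le (hf : DifferentiableOn ℂ f (ball 0 1)) {M : ℝ}
    (hM : ∀ r ∈ Ioo 0 1, circleAverage (fun z => ‖f z‖) 0 r ≤ M) : MemH1Disc f := by
  refine ⟨hf, 2 * π * M, fun r hr hr_lt => ?_⟩
  have := hM r ⟨hr, hr_lt⟩
  rw [Real.circleAverage_def, smul_eq_mul, inv_mul_le_iff₀ Real.two_pi_pos] at this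
  simpa only [circleMap, zero_add] using this

lemma integrableOn_of_setLIntegral_ofReal_lt_top {g h : ℂ → ℝ} {s : Set ℂ} (hs : MeasurableSet s)
    (hg : ContinuousOn g s) (hg_nonneg : ∀ z ∈ s, 0 ≤ g z) (hgh : ∀ z ∈ s, g z ≤ h z)
    (hh : ∫⁻ z in s, ENNReal.ofReal (h z) < ⊤) : IntegrableOn g s := by
  refine (lintegral_ofReal_ne_top_iff_integrable (hg.aestronglyMeasurable hs)
    (ae_restrict_of_forall_mem hs hg_nonneg)).1 (ne_top_of_le_ne_top hh.ne ?_)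
  exact setLIntegral_mono' hs fun z hz => ENNReal.ofReal_le_ofReal (hgh z hz)

lemma memH1Disc_of_integrableOn_smoothNorm (hf : DifferentiableOn ℂ f (ball 0 1))
    (hint : IntegrableOn (smoothNorm f) (ball 0 1))
    (hlap_int : IntegrableOn (fun z => (1 - ‖z‖ ^ 2) * lap (smoothNorm f) z) (ball 0 1)) :
    MemH1Disc f := by
  obtain ⟨M, hM⟩ := exists_circleAverage_le (contDiffOn_smoothNorm isOpen_ball hf)
    (smoothNorm_nonneg f)
    (fun z hz => lap_smoothNorm_nonneg (hf.analyticAt (isOpen_ball.mem_nhds hz))) hint hlap_int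
  refine memH1Disc_of_circleAverage_le (M := M + 1) hf fun r hr => ?_
  have hsphere : sphere (0 : ℂ) |r| ⊆ ball 0 1 := by
    rw [abs_of_pos hr.1]
    exact sphere_subset_ball hr.2
  have hnorm : CircleIntegrable (smoothNorm f) 0 r :=
    ((contDiffOn_smoothNorm isOpen_ball hf).continuousOn.mono hsphere).circleIntegrable'
  calc circleAverage (fun z => ‖f z‖) 0 r
      ≤ circleAverage (fun z => smoothNorm f z + 1) 0 r :=
        Real.circleAverage_mono (hf.continuousOn.norm.mono hsphere).circleIntegrable'
          (hnorm.add (circleIntegrable_const 1 0 r)) fun z _ => norm_le_smoothNorm_add_one f z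
    _ = circleAverage (smoothNorm f) 0 r + 1 := by
        rw [Real.circleAverage_fun_add hnorm (circleIntegrable_const 1 0 r),
          Real.circleAverage_const]
    _ ≤ M + 1 := by
        gcongr
        exact hM r ⟨hr.1.le, hr.2⟩

theorem MemPS.memH1Disc {u : ℂ → ℝ} {c : ℝ} {ν : Measure ℂ} {μfam : ℝ → Measure ℂ}
    (hcont : ContinuousOn u (closedBall 0 1)) (hu : ContDiffOn ℝ 2 u (ball 0 1))
    (hzero : ∀ z ∈ sphere 0 1, u z = 0) (hc : 0 < c) (hlap : ∀ z ∈ ball 0 1, c ≤ lap u z)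
    (hν : IsRieszMeasure u (ball 0 1) ν) (hμ : ∀ r < 0, IsMAMeasure u (ball 0 1) ν r (μfam r))
    (hf : MemPS 1 (ball 0 1) μfam f) : MemH1Disc f := by
  have hexh := isStrictExhaustion_ball hcont hu hzero hc hlap
  have hw := contDiffOn_smoothNorm isOpen_ball hf.1
  have hw_lap {z : ℂ} (hz : z ∈ ball 0 1) : 0 ≤ lap (smoothNorm f) z :=
    lap_smoothNorm_nonneg (hf.1.analyticAt (isOpen_ball.mem_nhds hz))
  have hmass : IntegrableOn (fun z => c * smoothNorm f z) (ball 0 1) :=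
    integrableOn_of_setLIntegral_ofReal_lt_top measurableSet_ball
      (continuousOn_const.mul hw.continuousOn)
      (fun z _ => mul_nonneg hc.le (smoothNorm_nonneg f z))
      (fun z hz => mul_le_mul_of_nonneg_right (hlap z hz) (smoothNorm_nonneg f z))
      (hf.setLIntegral_lap_mul_smoothNorm_lt_top hexh hν hμ)
  have hlap_mass :
      IntegrableOn (fun z => c / 8 * ((1 - ‖z‖ ^ 2) * lap (smoothNorm f) z)) (ball 0 1) := by
    refine integrableOn_of_setLIntegral_ofReal_lt_top measurableSet_ball
      (continuousOn_const.mul ((by fun_prop : Continuous fun z : ℂ => 1 - ‖z‖ ^ 2).continuousOn.mul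
        (continuousOn_lap isOpen_ball hw))) (fun z hz => ?_) (fun z hz => ?_)
      (hf.setLIntegral_neg_mul_lap_smoothNorm_lt_top hexh hν hμ)
    · have : 0 ≤ 1 - ‖z‖ ^ 2 := by nlinarith [norm_nonneg z, mem_ball_zero_iff.1 hz]
      have := hw_lap hz
      positivity
    · rw [← mul_assoc]
      refine mul_le_mul_of_nonneg_right (le_neg.1 ?_) (hw_lap hz)
      exact le_neg_mul_one_sub_norm_sq_of_le_lap hcont hu hzero hc hlap (ball_subset_closedBall hz)
  have hc_unit : IsUnit c := hc.ne'.isUnit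
  have hc_unit' : IsUnit (c / 8) := (by positivity : c / 8 ≠ 0).isUnit
  exact memH1Disc_of_integrableOn_smoothNorm hf.1 ((integrable_const_mul_iff hc_unit _).1 hmass)
    ((integrable_const_mul_iff hc_unit' _).1 hlap_mass)

end HardySpace

section Power

lemma setLIntegral_comp_re {s : Set ℝ} {g : ℝ → ℝ} {h : ℝ → ℝ≥0∞} (hs : MeasurableSet s)
    (hg : Measurable g) (hh : Measurable h) :
    ∫⁻ z in {z : ℂ | z.re ∈ s ∧ z.im ∈ Ioo 0 (g z.re)}, h z.re =
      ∫⁻ x in s, h x * ENNReal.ofReal (g x) := by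
  have hregion : MeasurableSet (regionBetween 0 g s) :=
    measurableSet_regionBetween measurable_zero hg hs
  have hslice (x : ℝ) : ∫⁻ y, (regionBetween 0 g s).indicator (fun p => h p.1) (x, y) =
      s.indicator (fun x => h x * ENNReal.ofReal (g x)) x := by
    have (y : ℝ) : (regionBetween 0 g s).indicator (fun p => h p.1) (x, y) =
        s.indicator (fun x => (Ioo 0 (g x)).indicator (fun _ => h x) y) x := by
      by_cases hx : x ∈ s <;> by_cases hy : y ∈ Ioo 0 (g x) <;>
        simp_all [indicator_apply, regionBetween]
    by_cases hx : x ∈ s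
    · simp only [this, indicator_of_mem hx, lintegral_indicator_const measurableSet_Ioo,
        Real.volume_Ioo, sub_zero]
    · simp only [this, indicator_of_notMem hx, lintegral_zero]
  calc ∫⁻ z in {z : ℂ | z.re ∈ s ∧ z.im ∈ Ioo 0 (g z.re)}, h z.re
      = ∫⁻ p in regionBetween 0 g s, h p.1 :=
        volume_preserving_equiv_real_prod.setLIntegral_comp_preimage hregion
          (hh.comp measurable_fst)
    _ = ∫⁻ x in s, h x * ENNReal.ofReal (g x) := by
        rw [← lintegral_indicator hregion, Measure.volume_eq_prod,
          lintegral_prod _ (Measurable.indicator (by fun_prop) hregion).aemeasurable,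
          ← lintegral_indicator hs]
        simp only [hslice]

lemma setLIntegral_Ioo_rpow_eq_top {s : ℝ} (hs : s ≤ -1) :
    ∫⁻ x in Ioo 0 1, ENNReal.ofReal (x ^ s) = ⊤ := by
  by_contra hne
  have hint : IntegrableOn (fun x : ℝ => x ^ s) (Ioo 0 1) :=
    (lintegral_ofReal_ne_top_iff_integrable
      (measurable_id.pow_const s).aestronglyMeasurable
      (ae_restrict_of_forall_mem measurableSet_Ioo fun x hx => Real.rpow_nonneg hx.1.le s)).1 hne
  exact hs.not_gt ((intervalIntegral.integrableOn_Ioo_rpow_iff zero_lt_one).1 hint)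

lemma two_mul_re_rpow_le_norm_rpow {z : ℂ} {a : ℝ} (hre : 0 < z.re) (hre_le : z.re ≤ 1)
    (him : z.im ^ 2 ≤ z.re) (ha : a ≤ 0) : (2 * z.re) ^ (a / 2) ≤ ‖z‖ ^ a := by
  have hnorm : ‖z‖ ^ 2 ≤ 2 * z.re := by
    rw [Complex.sq_norm, normSq_apply]
    nlinarith
  have hnorm_pos : 0 < ‖z‖ := hre.trans_le (re_le_norm z)
  calc (2 * z.re) ^ (a / 2) ≤ (‖z‖ ^ 2) ^ (a / 2) :=
        Real.rpow_le_rpow_of_nonpos (by positivity) hnorm (by linarith)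
    _ = ‖z‖ ^ a := by
        rw [← Real.rpow_natCast_mul hnorm_pos.le]
        congr 1
        push_cast
        ring

-- On the parabolic region `0 < Im z < √(Re z)` the norm is at most `√(2 Re z)`, and slicing the
-- region vertically contributes a further factor `√(Re z)`.
lemma setLIntegral_ball_one_norm_rpow_mul_re_rpow_eq_top {a b : ℝ} (ha : a ≤ 0)
    (hab : a / 2 + b ≤ -3 / 2) :
    ∫⁻ z in ball (1 : ℂ) 1, ENNReal.ofReal (‖z‖ ^ a * z.re ^ b) = ⊤ := by
  set T : Set ℂ := {z | z.re ∈ Ioo 0 1 ∧ z.im ∈ Ioo 0 √z.re}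
  have him {z : ℂ} (hz : z ∈ T) : z.im ^ 2 < z.re := (Real.lt_sqrt hz.2.1.le).1 hz.2.2
  have hT : T ⊆ ball 1 1 := fun z hz => by
    rw [mem_ball_iff_norm, ← sq_lt_one_iff₀ (norm_nonneg _), Complex.sq_norm, normSq_apply]
    simp only [sub_re, one_re, sub_im, one_im, sub_zero]
    nlinarith [him hz, hz.1.1, hz.1.2]
  have hle {z : ℂ} (hz : z ∈ T) :
      2 ^ (a / 2) * z.re ^ (a / 2 + b) ≤ ‖z‖ ^ a * z.re ^ b := by
    rw [Real.rpow_add hz.1.1, ← mul_assoc, ← Real.mul_rpow zero_le_two hz.1.1.le]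
    exact mul_le_mul_of_nonneg_right (two_mul_re_rpow_le_norm_rpow hz.1.1 hz.1.2.le (him hz).le ha)
      (Real.rpow_nonneg hz.1.1.le b)
  refine top_unique ?_
  calc ⊤ = ENNReal.ofReal (2 ^ (a / 2)) *
        ∫⁻ x in Ioo 0 1, ENNReal.ofReal (x ^ (a / 2 + b + 1 / 2)) := by
        rw [setLIntegral_Ioo_rpow_eq_top (by linarith), ENNReal.mul_top]
        exact (ENNReal.ofReal_pos.2 (by positivity)).ne'
    _ = ∫⁻ x in Ioo 0 1, ENNReal.ofReal (2 ^ (a / 2) * x ^ (a / 2 + b)) * ENNReal.ofReal √x := by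
        rw [← lintegral_const_mul _ (by fun_prop)]
        refine setLIntegral_congr_fun measurableSet_Ioo fun x hx => ?_
        rw [← ENNReal.ofReal_mul (by positivity), ← ENNReal.ofReal_mul
          (mul_nonneg (by positivity) (Real.rpow_nonneg hx.1.le _)), Real.sqrt_eq_rpow, mul_assoc,
          ← Real.rpow_add hx.1]
    _ = ∫⁻ z in T, ENNReal.ofReal (2 ^ (a / 2) * z.re ^ (a / 2 + b)) :=
        (setLIntegral_comp_re (h := fun x => ENNReal.ofReal (2 ^ (a / 2) * x ^ (a / 2 + b)))
          measurableSet_Ioo (by fun_prop) (by fun_prop)).symm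
    _ ≤ ∫⁻ z in T, ENNReal.ofReal (‖z‖ ^ a * z.re ^ b) :=
        setLIntegral_mono (by fun_prop) fun z hz => ENNReal.ofReal_le_ofReal (hle hz)
    _ ≤ ∫⁻ z in ball (1 : ℂ) 1, ENNReal.ofReal (‖z‖ ^ a * z.re ^ b) := lintegral_mono_set hT

lemma setLIntegral_norm_one_sub_rpow_mul_eq_top {a b : ℝ} (ha : a ≤ 0)
    (hab : a / 2 + b ≤ -3 / 2) :
    ∫⁻ z in ball (0 : ℂ) 1, ENNReal.ofReal (‖1 - z‖ ^ a * (1 - z.re) ^ b) = ⊤ := by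
  have hpreimage : (fun z : ℂ => 1 - z) ⁻¹' ball 1 1 = ball 0 1 := by
    ext z
    simp [mem_ball_iff_norm, -mem_ball]
  have hreflect := (Measure.measurePreserving_sub_left volume (1 : ℂ)).setLIntegral_comp_preimage
    (f := fun z => ENNReal.ofReal (‖z‖ ^ a * z.re ^ b)) (s := ball 1 1) measurableSet_ball
    (by fun_prop)
  rwa [hpreimage, setLIntegral_ball_one_norm_rpow_mul_re_rpow_eq_top ha hab] at hreflect

end Power

section HardyPower

open Real (circleAverage)

lemma norm_one_sub_le_two_mul {E : ℂ} (hE : ‖E‖ = 1) {r : ℝ} (hr : 0 ≤ r) (hr_le : r ≤ 1) :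
    ‖1 - E‖ ≤ 2 * ‖1 - r * E‖ := by
  have hrE : ‖(r : ℂ) * E‖ = r := by rw [norm_mul, hE, mul_one, Complex.norm_of_nonneg hr]
  calc ‖1 - E‖ = ‖(1 - r * E) - (1 - r : ℝ) * E‖ := by
        push_cast
        ring_nf
    _ ≤ ‖1 - r * E‖ + ‖((1 - r : ℝ) : ℂ) * E‖ := norm_sub_le _ _
    _ = ‖1 - r * E‖ + (1 - r) := by
        rw [norm_mul, hE, mul_one, Complex.norm_of_nonneg (sub_nonneg.2 hr_le)]
    _ ≤ 2 * ‖1 - r * E‖ := by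
        have := norm_sub_norm_le (1 : ℂ) (r * E)
        rw [norm_one, hrE] at this
        linarith

lemma abs_div_pi_le_norm_one_sub_circleMap {r θ : ℝ} (hr : 0 ≤ r) (hr_le : r ≤ 1)
    (hθ : |θ| ≤ π) : |θ| / π ≤ ‖1 - circleMap 0 r θ‖ := by
  have hsin : |θ| / π ≤ |Real.sin (θ / 2)| := by
    have hhalf : |θ / 2| = |θ| / 2 := by rw [abs_div, abs_two]
    have := Real.mul_abs_le_abs_sin (x := θ / 2) (by linarith)
    rw [hhalf] at this
    convert this using 1
    ring
  have hchord : ‖1 - exp (θ * I)‖ = 2 * |Real.sin (θ / 2)| := by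
    rw [norm_sub_rev, mul_comm, norm_exp_I_mul_ofReal_sub_one, Real.norm_eq_abs, abs_mul, abs_two]
  have := norm_one_sub_le_two_mul (norm_exp_ofReal_mul_I θ) hr hr_le
  rw [circleMap_zero]
  linarith

lemma intervalIntegrable_abs_rpow {a : ℝ} (ha : -1 < a) (x y : ℝ) :
    IntervalIntegrable (fun θ => |θ| ^ a) volume x y := by
  refine intervalIntegrable_of_even (fun θ => by rw [abs_neg]) fun t ht => ?_
  refine (intervalIntegral.intervalIntegrable_rpow' ha).congr fun θ hθ => ?_
  rw [uIoc_of_le ht.le] at hθ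
  simp only [abs_of_pos hθ.1]

lemma one_sub_mem_slitPlane {z : ℂ} (hz : z ∈ ball 0 1) : 1 - z ∈ slitPlane := by
  refine Or.inl ?_
  rw [sub_re, one_re]
  linarith [re_le_norm z, mem_ball_zero_iff.1 hz]

lemma memH1Disc_one_sub_cpow {a : ℝ} (ha : -1 < a) (ha_nonpos : a ≤ 0) :
    MemH1Disc fun z => (1 - z) ^ (a : ℂ) := by
  have hdiff : DifferentiableOn ℂ (fun z : ℂ => (1 - z) ^ (a : ℂ)) (ball 0 1) := fun z hz =>
    (DifferentiableAt.cpow (by fun_prop) (by fun_prop)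
      (one_sub_mem_slitPlane hz)).differentiableWithinAt
  refine memH1Disc_of_circleAverage_le (M := (2 * π)⁻¹ * ∫ θ in -π..π, |θ| ^ a / π ^ a) hdiff
    fun r hr => ?_
  have hball (θ : ℝ) : circleMap 0 r θ ∈ ball 0 1 := by
    rw [mem_ball_zero_iff, norm_circleMap_zero, abs_of_pos hr.1]
    exact hr.2
  have hcont : Continuous fun θ => ‖(1 - circleMap 0 r θ) ^ (a : ℂ)‖ :=
    (hdiff.continuousOn.comp_continuous (continuous_circleMap 0 r) hball).norm
  have hbound : ∀ᵐ θ ∂volume.restrict (Icc (-π) π),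
      ‖(1 - circleMap 0 r θ) ^ (a : ℂ)‖ ≤ |θ| ^ a / π ^ a := by
    filter_upwards [ae_restrict_mem measurableSet_Icc, ae_restrict_of_ae (Measure.ae_ne volume 0)]
      with θ hθ hθ_ne
    rw [norm_cpow_real, ← Real.div_rpow (abs_nonneg θ) Real.pi_pos.le]
    exact Real.rpow_le_rpow_of_nonpos (by positivity)
      (abs_div_pi_le_norm_one_sub_circleMap hr.1.le hr.2.le (abs_le.2 hθ)) ha_nonpos
  rw [Real.circleAverage_eq_integral_add (-π), smul_eq_mul,
    intervalIntegral.integral_comp_add_right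
      (fun θ => ‖(1 - circleMap 0 r θ) ^ (a : ℂ)‖)]
  gcongr
  rw [zero_add, show 2 * π + -π = π by ring]
  exact intervalIntegral.integral_mono_ae_restrict (by linarith [Real.pi_pos])
    (hcont.intervalIntegrable _ _) ((intervalIntegrable_abs_rpow ha _ _).div_const _) hbound

end HardyPower

/-- The function `u₀ = -(1 - Re z)^β - ρ`, which exhausts the disc when `ρ` is the harmonic function
with boundary values `-(1 - Re z)^β`. -/
def powerExhaustion (β : ℝ) (ρ : ℂ → ℝ) (z : ℂ) : ℝ := -(1 - z.re) ^ β - ρ z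

section PowerExhaustion

variable {β : ℝ} {ρ : ℂ → ℝ} {z : ℂ}

lemma lap_comp_re {g g' : ℝ → ℝ} {g'' : ℝ} (hg : ∀ᶠ x in 𝓝 z.re, HasDerivAt g (g' x) x)
    (hg' : HasDerivAt g' g'' z.re) : lap (fun w => g w.re) z = g'' := by
  have hfderiv (w : ℂ) : fderiv ℝ Complex.re w = reCLM := reCLM.fderiv
  have hlap := lap_comp (φ := Complex.re) reCLM.contDiff.contDiffAt hg hg'
  simpa [lap, hfderiv] using hlap

lemma lap_neg_one_sub_re_rpow (hz : z.re < 1) :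
    lap (fun w => -(1 - w.re) ^ β) z = β * (1 - β) * (1 - z.re) ^ (β - 2) := by
  have hderiv (p x : ℝ) (hx : x < 1) :
      HasDerivAt (fun x => -(1 - x) ^ p) (p * (1 - x) ^ (p - 1)) x := by
    refine (((hasDerivAt_id x).const_sub 1).rpow_const (p := p)
      (Or.inl (sub_pos.2 hx).ne')).neg.congr_deriv ?_
    simp only [id_eq]
    ring
  refine lap_comp_re (eventually_of_mem (Iio_mem_nhds hz) (hderiv β))
    ((((hderiv (β - 1) z.re hz).const_mul (-β))).congr_of_eventuallyEq ?_ |>.congr_deriv ?_)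
  · exact .of_forall fun x => by ring
  · rw [sub_sub, one_add_one_eq_two]
    ring

lemma re_lt_one_of_mem_ball (hz : z ∈ ball 0 1) : z.re < 1 :=
  (re_le_norm z).trans_lt (mem_ball_zero_iff.1 hz)

lemma contDiffOn_neg_one_sub_re_rpow (β : ℝ) :
    ContDiffOn ℝ 2 (fun z : ℂ => -(1 - z.re) ^ β) (ball 0 1) :=
  ((contDiffOn_const.sub reCLM.contDiff.contDiffOn).rpow_const_of_ne fun _ hz =>
    (sub_pos.2 (re_lt_one_of_mem_ball hz)).ne').neg

lemma contDiffOn_powerExhaustion (hρ : HarmonicOn ρ (ball 0 1)) :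
    ContDiffOn ℝ 2 (powerExhaustion β ρ) (ball 0 1) :=
  (contDiffOn_neg_one_sub_re_rpow β).sub hρ.1

lemma continuousOn_powerExhaustion (hβ : 0 ≤ β) (hρ : ContinuousOn ρ (closedBall 0 1)) :
    ContinuousOn (powerExhaustion β ρ) (closedBall 0 1) :=
  ((continuous_const.sub continuous_re).rpow_const fun _ => Or.inr hβ).neg.continuousOn.sub hρ

lemma lap_powerExhaustion (hρ : HarmonicOn ρ (ball 0 1)) (hz : z ∈ ball 0 1) :
    lap (powerExhaustion β ρ) z = β * (1 - β) * (1 - z.re) ^ (β - 2) := by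
  have hnhds := isOpen_ball.mem_nhds hz
  calc lap (powerExhaustion β ρ) z
      = lap (fun w => -(1 - w.re) ^ β) z - lap ρ z :=
        lap_sub ((contDiffOn_neg_one_sub_re_rpow β).contDiffAt hnhds) (hρ.1.contDiffAt hnhds)
    _ = β * (1 - β) * (1 - z.re) ^ (β - 2) := by
        rw [lap_neg_one_sub_re_rpow (re_lt_one_of_mem_ball hz), hρ.2 z hz, sub_zero]

lemma le_lap_powerExhaustion (hβ : 0 ≤ β) (hβ_le : β ≤ 1) (hρ : HarmonicOn ρ (ball 0 1))
    (hz : z ∈ ball 0 1) : β * (1 - β) * 2 ^ (β - 2) ≤ lap (powerExhaustion β ρ) z := by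
  have hre : -1 ≤ z.re := by
    linarith [neg_le_of_abs_le (abs_re_le_norm z), mem_ball_zero_iff.1 hz]
  rw [lap_powerExhaustion hρ hz]
  refine mul_le_mul_of_nonneg_left ?_ (mul_nonneg hβ (sub_nonneg.2 hβ_le))
  exact Real.rpow_le_rpow_of_nonpos (sub_pos.2 (re_lt_one_of_mem_ball hz)) (by linarith)
    (by linarith)

lemma setLIntegral_lap_powerExhaustion_mul (hβ : 0 ≤ β) (hβ_le : β ≤ 1)
    (hρ : HarmonicOn ρ (ball 0 1)) (g : ℂ → ℝ) :
    ∫⁻ z in ball 0 1, ENNReal.ofReal (lap (powerExhaustion β ρ) z * g z) =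
      ENNReal.ofReal (β * (1 - β)) *
        ∫⁻ z in ball 0 1, ENNReal.ofReal (g z * (1 - z.re) ^ (β - 2)) := by
  rw [← lintegral_const_mul' _ _ ENNReal.ofReal_ne_top]
  refine setLIntegral_congr_fun measurableSet_ball fun z hz => ?_
  rw [lap_powerExhaustion hρ hz, ← ENNReal.ofReal_mul (mul_nonneg hβ (sub_nonneg.2 hβ_le))]
  ring_nf

lemma one_half_le_norm_one_sub_cpow {a : ℝ} (ha : -1 ≤ a) (ha_nonpos : a ≤ 0)
    (hz : z ∈ ball 0 1) : 1 / 2 ≤ ‖(1 - z) ^ (a : ℂ)‖ := by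
  have hpos : 0 < ‖1 - z‖ := norm_pos_iff.2 (slitPlane_ne_zero (one_sub_mem_slitPlane hz))
  have hle : ‖1 - z‖ ≤ 2 := by
    have := norm_sub_le 1 z
    rw [norm_one] at this
    linarith [mem_ball_zero_iff.1 hz]
  calc (1 : ℝ) / 2 = 2 ^ (-1 : ℝ) := by rw [Real.rpow_neg_one, one_div]
    _ ≤ 2 ^ a := Real.rpow_le_rpow_of_exponent_le one_le_two ha
    _ ≤ ‖1 - z‖ ^ a := Real.rpow_le_rpow_of_nonpos hpos hle ha_nonpos
    _ = ‖(1 - z) ^ (a : ℂ)‖ := (norm_cpow_real _ _).symm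

end PowerExhaustion

theorem stmt6_general (β q : ℝ) (hβ0 : 0 < β) (hβ1 : β < 1) (hq0 : 0 ≤ q) (hβq : β - 1 / 2 ≤ q)
    (hq1 : q < 1 / 2) (ρ : ℂ → ℝ) (hρcont : ContinuousOn ρ (closedBall (0 : ℂ) 1))
    (hρharm : HarmonicOn ρ (ball (0 : ℂ) 1))
    (hρbd : ∀ z ∈ sphere (0 : ℂ) 1, ρ z = -(1 - z.re) ^ β) (ν : Measure ℂ)
    (hν : IsRieszMeasure (fun z => -(1 - z.re) ^ β - ρ z) (ball (0 : ℂ) 1) ν)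
    (μfam : ℝ → Measure ℂ)
    (hμ : ∀ r : ℝ, r < 0 →
      IsMAMeasure (fun z => -(1 - z.re) ^ β - ρ z) (ball (0 : ℂ) 1) ν r (μfam r)) :
    (∫⁻ z in ball (0 : ℂ) 1,
        ENNReal.ofReal (‖(1 - z) ^ (-2 * (q : ℂ))‖ * (1 - z.re) ^ (β - 2)) = ⊤) ∧
    MemH1Disc (fun z => (1 - z) ^ (-2 * (q : ℂ))) ∧
    ¬ MemPS 1 (ball (0 : ℂ) 1) μfam (fun z => (1 - z) ^ (-2 * (q : ℂ))) ∧
    {f : ℂ → ℂ | MemPS 1 (ball (0 : ℂ) 1) μfam f} ⊂ {f : ℂ → ℂ | MemH1Disc f} := by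
  have hc : 0 < β * (1 - β) * 2 ^ (β - 2) :=
    mul_pos (mul_pos hβ0 (sub_pos.2 hβ1)) (by positivity)
  have hcont := continuousOn_powerExhaustion hβ0.le hρcont
  have hu := contDiffOn_powerExhaustion (β := β) hρharm
  have hzero (z) (hz : z ∈ sphere 0 1) : powerExhaustion β ρ z = 0 := by
    rw [powerExhaustion, hρbd z hz, sub_self]
  have hlap (z) (hz : z ∈ ball 0 1) := le_lap_powerExhaustion hβ0.le hβ1.le hρharm hz
  have hexp : -2 * (q : ℂ) = (-2 * q : ℝ) := by push_cast; rfl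
  rw [hexp]
  have hdiv : ∫⁻ z in ball (0 : ℂ) 1,
      ENNReal.ofReal (‖(1 - z) ^ ((-2 * q : ℝ) : ℂ)‖ * (1 - z.re) ^ (β - 2)) = ⊤ := by
    simp only [norm_cpow_real]
    exact setLIntegral_norm_one_sub_rpow_mul_eq_top (by linarith) (by linarith)
  have hmem := memH1Disc_one_sub_cpow (a := -2 * q) (by linarith) (by linarith)
  have hnot : ¬ MemPS 1 (ball 0 1) μfam fun z => (1 - z) ^ ((-2 * q : ℝ) : ℂ) := fun hf => by
    have hfinite := hf.setLIntegral_lap_mul_norm_lt_top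
      (isStrictExhaustion_ball hcont hu hzero hc hlap) hν hμ
      fun z hz => one_half_le_norm_one_sub_cpow (by linarith) (by linarith) hz
    rw [setLIntegral_lap_powerExhaustion_mul hβ0.le hβ1.le hρharm, hdiv, ENNReal.mul_top
      (ENNReal.ofReal_pos.2 (mul_pos hβ0 (sub_pos.2 hβ1))).ne'] at hfinite
    exact hfinite.false
  exact ⟨hdiv, hmem, hnot, (ssubset_iff_of_subset fun f hf =>
    hf.memH1Disc hcont hu hzero hc hlap hν hμ).2 ⟨_, hmem, hnot⟩⟩

/-- For `1/4 < q < 1/2` and `F(z) = (1-z)^{-2q}`,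
`∫_𝔻 |F(z)| (1 - Re z)^{-5/4} dA(z) = ∞`; consequently `F ∉ H^1_{u₀}(𝔻)` although
`F ∈ H^1(𝔻)`, so `H^1_{u₀}(𝔻) ⊊ H^1(𝔻)`. -/
theorem stmt6 (q : ℝ) (hq0 : 1/4 < q) (hq1 : q < 1/2) (ρ : ℂ → ℝ)
    (hρcont : ContinuousOn ρ (closedBall (0:ℂ) 1))
    (hρharm : HarmonicOn ρ (ball (0:ℂ) 1))
    (hρbd : ∀ z ∈ sphere (0:ℂ) 1, ρ z = -(1 - z.re) ^ (3/4 : ℝ))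
    (ν : Measure ℂ)
    (hν : IsRieszMeasure (fun z => -(1 - z.re) ^ (3/4 : ℝ) - ρ z) (ball (0:ℂ) 1) ν)
    (μfam : ℝ → Measure ℂ)
    (hμ : ∀ r : ℝ, r < 0 →
      IsMAMeasure (fun z => -(1 - z.re) ^ (3/4 : ℝ) - ρ z) (ball (0:ℂ) 1) ν r (μfam r)) :
    (∫⁻ z in ball (0:ℂ) 1,
        ENNReal.ofReal (‖(1 - z) ^ (-2 * (q:ℂ))‖ * (1 - z.re) ^ (-(5:ℝ)/4)) = ⊤) ∧
    MemH1Disc (fun z => (1 - z) ^ (-2 * (q:ℂ))) ∧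
    ¬ MemPS 1 (ball (0:ℂ) 1) μfam (fun z => (1 - z) ^ (-2 * (q:ℂ))) ∧
    {f : ℂ → ℂ | MemPS 1 (ball (0:ℂ) 1) μfam f} ⊂ {f : ℂ → ℂ | MemH1Disc f} := by
  have hexp : (-(5:ℝ)/4) = 3/4 - 2 := by norm_num
  rw [hexp]
  exact stmt6_general (3/4) q (by norm_num) (by norm_num) (by linarith) (by linarith) hq1 ρ hρcont
    hρharm hρbd ν hν μfam hμ

end
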